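/- Under Assumption 1, for any step size η ∈ (0, η₀ ∧ 2/(m+L)), the 2-Wasserstein distance between the stationary distribution π_η of the PRLMC chain and the target π(dx) ∝ exp(−U(x))dx satisfies W₂(π_η, π) ≤ (L/m)·η^{1/2}·[ (2d + 4η²Ld + 8L²η²d)^{1/2} + √(4 − 2/K)·( ηL²·π_η(|x|²)/3 + d )^{1/2} ], where π_η(|x|²) = ∫_{ℝ^d}|x|² π_η(dx). -/

import Mathlib

open MeasureTheory ProbabilityTheory Filter
open scoped ENNReal NNReal RealInnerProductSpace Topology BigOperators

noncomputable section

/-- Euclidean space `ℝ^d`. -/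
abbrev Euc (d : ℕ) : Type := EuclideanSpace ℝ (Fin d)

/-- Assumption 1: `U` is `C¹`, `m`-strongly convex and `L`-gradient Lipschitz
(expressed through the two-sided quadratic bound), with `∇U(0) = 0`. -/
def StrongAssumption {d : ℕ} (U : Euc d → ℝ) (m L : ℝ) : Prop :=
  ContDiff ℝ 1 U ∧ 0 < m ∧ m ≤ L ∧
  (∀ x y : Euc d,
    m / 2 * ‖x - y‖ ^ 2 ≤ U y - U x - ⟪gradient U x, y - x⟫ ∧
    U y - U x - ⟪gradient U x, y - x⟫ ≤ L / 2 * ‖x - y‖ ^ 2) ∧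
  gradient U 0 = 0

/-- Assumption 3: `U` is `C³` with third derivative uniformly bounded by `Lt`. -/
def ThirdDerivBounded {d : ℕ} (U : Euc d → ℝ) (Lt : ℝ) : Prop :=
  ContDiff ℝ 3 U ∧ ∀ x : Euc d, ‖iteratedFDeriv ℝ 3 U x‖ ≤ Lt

/-- The standard Gaussian measure on `ℝ^d`. -/
def stdGaussian (d : ℕ) : Measure (Euc d) :=
  (Measure.pi fun _ : Fin d => ProbabilityTheory.gaussianReal 0 1).map
    ⇑(EuclideanSpace.equiv (Fin d) ℝ).symm

/-- Bernoulli(p) distribution on `ℝ`, giving mass `p` to `1` and `1-p` to `0`. -/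
def bern (p : ℝ≥0∞) : Measure ℝ :=
  p • Measure.dirac (1 : ℝ) + (1 - p) • Measure.dirac (0 : ℝ)

/-- The `i`-th PRLMC midpoint. -/
def prlmcMid {d : ℕ} (U : Euc d → ℝ) (η : ℝ) (K : ℕ) (x : Euc d)
    (g : Fin K → Euc d) (i : Fin K) : Euc d :=
  x - (((i : ℝ) * η / (K : ℝ)) • gradient U x) + Real.sqrt (2 * (i : ℝ) * η / (K : ℝ)) • g i

/-- One step of the PRLMC scheme with step size `η`, Bernoulli variables `h`,
midpoint Gaussians `g` and driving Gaussian `z`. -/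
def prlmcStep {d : ℕ} (U : Euc d → ℝ) (η : ℝ) (K : ℕ) (x : Euc d)
    (h : Fin K → ℝ) (g : Fin K → Euc d) (z : Euc d) : Euc d :=
  x - η • gradient U x
    + η • ∑ i : Fin K, h i • (gradient U x - gradient U (prlmcMid U η K x g i))
    + Real.sqrt (2 * η) • z

/-- The law of the randomness used at a single step of the PRLMC scheme:
`K` i.i.d. Bernoulli(1/K) variables, `K` i.i.d. standard Gaussians for the midpoints
and one standard Gaussian. -/
def prlmcNoise (d K : ℕ) : Measure ((Fin K → ℝ) × (Fin K → Euc d) × Euc d) :=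
  (Measure.pi fun _ : Fin K => bern (K : ℝ≥0∞)⁻¹).prod
    ((Measure.pi fun _ : Fin K => stdGaussian d).prod (stdGaussian d))

/-- The one-step transition kernel `Q_η` of the PRLMC chain. -/
def prlmcKernel {d : ℕ} (U : Euc d → ℝ) (η : ℝ) (K : ℕ) (x : Euc d) : Measure (Euc d) :=
  (prlmcNoise d K).map fun r => prlmcStep U η K x r.1 r.2.1 r.2.2

/-- The law of the PRLMC chain after `n` steps, started from the distribution `μ`. -/
def prlmcIter {d : ℕ} (U : Euc d → ℝ) (η : ℝ) (K : ℕ) (μ : Measure (Euc d)) :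
    ℕ → Measure (Euc d)
  | 0 => μ
  | n + 1 => (prlmcIter U η K μ n).bind (prlmcKernel U η K)

/-- The law of the decreasing-step PRLMC chain after `n` steps (the `(k+1)`-th step uses
step size `γ (k+1)`), started from the distribution `μ`. -/
def prlmcIterVar {d : ℕ} (U : Euc d → ℝ) (K : ℕ) (γ : ℕ → ℝ) (μ : Measure (Euc d)) :
    ℕ → Measure (Euc d)
  | 0 => μ
  | n + 1 => (prlmcIterVar U K γ μ n).bind (prlmcKernel U (γ (n + 1)) K)

/-- Total variation distance. -/
def dTV {d : ℕ} (μ ν : Measure (Euc d)) : ℝ≥0∞ :=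
  ⨆ (A : Set (Euc d)) (_ : MeasurableSet A), max (μ A - ν A) (ν A - μ A)

/-- 2-Wasserstein distance. -/
def W2 {d : ℕ} (μ ν : Measure (Euc d)) : ℝ≥0∞ :=
  ⨅ (π : Measure (Euc d × Euc d)) (_ : π.map Prod.fst = μ ∧ π.map Prod.snd = ν),
    (∫⁻ p, ((‖p.1 - p.2‖₊ : ℝ≥0∞)) ^ 2 ∂π) ^ (1 / 2 : ℝ)

/-- The Gibbs measure `π(dx) ∝ exp(-U(x)) dx`. -/
def gibbs {d : ℕ} (U : Euc d → ℝ) : Measure (Euc d) :=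
  (∫⁻ x, ENNReal.ofReal (Real.exp (-U x)) ∂(volume : Measure (Euc d)))⁻¹ •
    (volume : Measure (Euc d)).withDensity fun x => ENNReal.ofReal (Real.exp (-U x))

/-- Membership in the functional class `𝒢`: `C²` functions with bounded gradient and
bounded Hessian. -/
def MemG {d : ℕ} (h : Euc d → ℝ) : Prop :=
  ContDiff ℝ 2 h ∧ (∃ M, ∀ x, ‖gradient h x‖ ≤ M) ∧
    (∃ M, ∀ x, ‖iteratedFDeriv ℝ 2 h x‖ ≤ M)

/-- The distance `d_𝒢`. -/
def dG {d : ℕ} (μ ν : Measure (Euc d)) : ℝ :=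
  sSup { r : ℝ | ∃ h : Euc d → ℝ, MemG h ∧ r = (∫ x, h x ∂μ) - ∫ x, h x ∂ν }

/-- `B` is a standard `d`-dimensional Brownian motion on `(Ω, P)`. -/
def IsBrownianMotion {Ω : Type} [MeasurableSpace Ω] {d : ℕ} (P : Measure Ω)
    (B : ℝ → Ω → Euc d) : Prop :=
  (∀ t, Measurable (B t)) ∧
  (∀ᵐ ω ∂P, B 0 ω = 0 ∧ Continuous fun t => B t ω) ∧
  (∀ s t : ℝ, 0 ≤ s → s ≤ t →
    Measure.map (fun ω => B t ω - B s ω) P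
      = Measure.map (fun z => Real.sqrt (t - s) • z) (stdGaussian d)) ∧
  (∀ τ : ℕ → ℝ, Monotone τ → 0 ≤ τ 0 →
    iIndepFun (fun (i : ℕ) ω => B (τ (i + 1)) ω - B (τ i) ω) P)

/-- `X` is a solution of the Langevin SDE `dX_t = -∇U(X_t) dt + √2 dB_t` started at `x`. -/
def SolvesLangevin {Ω : Type} [MeasurableSpace Ω] {d : ℕ} (U : Euc d → ℝ) (P : Measure Ω)
    (B X : ℝ → Ω → Euc d) (x : Euc d) : Prop :=
  (∀ t, Measurable (X t)) ∧
  ∀ᵐ ω ∂P, (Continuous fun t => X t ω) ∧ ∀ t, 0 ≤ t →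
    X t ω = x - (∫ s in (0:ℝ)..t, gradient U (X s ω)) + Real.sqrt 2 • B t ω

/-- `κ = 2mL/(m+L)`. -/
def kap (m L : ℝ) : ℝ := 2 * m * L / (m + L)

/-- Cumulative times `t_n = γ_1 + ⋯ + γ_n`. -/
def tseq (γ : ℕ → ℝ) (n : ℕ) : ℝ := ∑ k ∈ Finset.Icc 1 n, γ k

/-!
The diffusion is replaced by random maps `Y` that preserve `gibbs U` exactly and follow the Euler
step driven by the same Gaussian increment up to an arbitrarily small extra error: many tiny
Metropolis-adjusted Langevin steps, whose proposal is rejected so rarely that the total mean-square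
error vanishes as their number grows. For this a Lipschitz gradient suffices: the logarithm of the
acceptance ratio is essentially the error of the trapezoidal rule for `U`, which is `o(|y - x|²)`
wherever `∇U` is differentiable, hence almost everywhere by Rademacher's theorem.

A stationary PRLMC chain and `Y` are then run from the two marginals of an arbitrary coupling of
`π_η` and `gibbs U` with a common increment. Both laws are preserved, so `W₂` reproduces itself: it
is at most a contraction factor `1 - ηm + η²L²/2` times itself, plus the size of the Poisson
midpoint correction, whose `ξ'`-part has variance of order `η³L²(2 - 2/K)d`, plus the distance
between `Y` and one Euler step, which is of order `η^{3/2}L√(2d)`. Dividing by `ηm` gives the bound.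

Existence and uniqueness of `π_η` come from the contraction of the chain in mean square: the
backward iterations of the chain form a Cauchy sequence in `L²`.
-/

/-! ### Gradients of smooth strongly convex functions -/

section Convexity

variable {F : Type*} [NormedAddCommGroup F] [InnerProductSpace ℝ F]
  {f : F → ℝ} {g : F → F} {m L η : ℝ}

lemma mul_norm_sub_sq_le_inner_of_quadratic_lower_bound
    (hf : ∀ x y, m / 2 * ‖x - y‖ ^ 2 ≤ f y - f x - ⟪g x, y - x⟫) (x y : F) :
    m * ‖x - y‖ ^ 2 ≤ ⟪g x - g y, x - y⟫ := by
  have hxy := hf x y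
  have hyx := hf y x
  rw [norm_sub_rev y x] at hyx
  rw [← neg_sub x y, inner_neg_right] at hxy
  rw [inner_sub_left]
  linarith

/-- Both bounds are compared at `z = y - L⁻¹ (g y - g x)`, the gradient step from `y` for the
function `f - ⟪g x, ·⟫`, which is minimal at `x`. -/
lemma norm_sub_sq_le_of_quadratic_bounds (hL : 0 < L)
    (hlow : ∀ x y, 0 ≤ f y - f x - ⟪g x, y - x⟫)
    (hup : ∀ x y, f y - f x - ⟪g x, y - x⟫ ≤ L / 2 * ‖x - y‖ ^ 2) (x y : F) :
    ‖g y - g x‖ ^ 2 ≤ 2 * L * (f y - f x - ⟪g x, y - x⟫) := by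
  set v := g y - g x with hv
  have hlow' := hlow x (y - L⁻¹ • v)
  have hup' := hup y (y - L⁻¹ • v)
  have hsplit : y - L⁻¹ • v - x = (y - x) - L⁻¹ • v := by abel
  have hv_sq : ‖v‖ ^ 2 = ⟪g y, v⟫ - ⟪g x, v⟫ := by
    rw [← inner_sub_left, ← hv, real_inner_self_eq_norm_sq]
  rw [hsplit, inner_sub_right, inner_smul_right] at hlow'
  rw [sub_sub_cancel, sub_sub_cancel_left, inner_neg_right, inner_smul_right, norm_smul, mul_pow,
    Real.norm_eq_abs, sq_abs] at hup'
  have hdescent : L⁻¹ / 2 * ‖v‖ ^ 2 ≤ f y - f x - ⟪g x, y - x⟫ := by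
    have h : L / 2 * (L⁻¹ ^ 2 * ‖v‖ ^ 2) = L⁻¹ / 2 * ‖v‖ ^ 2 := by field_simp
    linear_combination hlow' + hup' + h + L⁻¹ * hv_sq
  calc ‖v‖ ^ 2 = 2 * L * (L⁻¹ / 2 * ‖v‖ ^ 2) := by field_simp
    _ ≤ 2 * L * (f y - f x - ⟪g x, y - x⟫) := by gcongr

lemma norm_sub_le_of_quadratic_bounds (hL : 0 < L)
    (hlow : ∀ x y, 0 ≤ f y - f x - ⟪g x, y - x⟫)
    (hup : ∀ x y, f y - f x - ⟪g x, y - x⟫ ≤ L / 2 * ‖x - y‖ ^ 2) (x y : F) :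
    ‖g x - g y‖ ≤ L * ‖x - y‖ := by
  have hcoercive : ‖g x - g y‖ ^ 2 ≤ L * ⟪g x - g y, x - y⟫ := by
    have hxy := norm_sub_sq_le_of_quadratic_bounds hL hlow hup x y
    have hyx := norm_sub_sq_le_of_quadratic_bounds hL hlow hup y x
    rw [norm_sub_rev, ← neg_sub x y, inner_neg_right] at hxy
    rw [inner_sub_left]
    linarith
  have hmul : ‖g x - g y‖ * ‖g x - g y‖ ≤ L * ‖x - y‖ * ‖g x - g y‖ := by
    nlinarith [mul_le_mul_of_nonneg_left (real_inner_le_norm (g x - g y) (x - y)) hL.le]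
  rcases (norm_nonneg (g x - g y)).eq_or_lt with h0 | hpos
  · rw [← h0]
    positivity
  · exact le_of_mul_le_mul_right hmul hpos

lemma norm_sub_smul_sq_le {v w : F} (hη : 0 ≤ η) (hmono : m * ‖v‖ ^ 2 ≤ ⟪w, v⟫)
    (hlip : ‖w‖ ≤ L * ‖v‖) :
    ‖v - η • w‖ ^ 2 ≤ (1 - 2 * η * m + η ^ 2 * L ^ 2) * ‖v‖ ^ 2 := by
  have hlip_sq : ‖w‖ ^ 2 ≤ (L * ‖v‖) ^ 2 := by gcongr
  calc ‖v - η • w‖ ^ 2 = ‖v‖ ^ 2 - 2 * η * ⟪w, v⟫ + η ^ 2 * ‖w‖ ^ 2 := by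
        rw [norm_sub_sq_real, inner_smul_right, norm_smul, mul_pow, Real.norm_eq_abs, sq_abs,
          real_inner_comm]
        ring
    _ ≤ ‖v‖ ^ 2 - 2 * η * (m * ‖v‖ ^ 2) + η ^ 2 * (L * ‖v‖) ^ 2 := by gcongr
    _ = (1 - 2 * η * m + η ^ 2 * L ^ 2) * ‖v‖ ^ 2 := by ring

lemma norm_sub_smul_le {v w : F} (hη : 0 ≤ η) (hmL : m ≤ L) (hmono : m * ‖v‖ ^ 2 ≤ ⟪w, v⟫)
    (hlip : ‖w‖ ≤ L * ‖v‖) :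
    ‖v - η • w‖ ≤ (1 - η * m + η ^ 2 * L ^ 2 / 2) * ‖v‖ := by
  have hfactor : 0 ≤ 1 - η * m + η ^ 2 * L ^ 2 / 2 := by
    nlinarith [mul_le_mul_of_nonneg_left hmL hη, sq_nonneg (1 - η * L)]
  refine le_of_sq_le_sq ?_ (by positivity)
  calc ‖v - η • w‖ ^ 2 ≤ (1 - 2 * η * m + η ^ 2 * L ^ 2) * ‖v‖ ^ 2 :=
        norm_sub_smul_sq_le hη hmono hlip
    _ ≤ (1 - η * m + η ^ 2 * L ^ 2 / 2) ^ 2 * ‖v‖ ^ 2 := by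
        gcongr
        nlinarith [sq_nonneg (η * m - η ^ 2 * L ^ 2 / 2)]
    _ = ((1 - η * m + η ^ 2 * L ^ 2 / 2) * ‖v‖) ^ 2 := by ring

end Convexity

namespace StrongAssumption

variable {d : ℕ} {U : Euc d → ℝ} {m L : ℝ}

lemma const_pos (h : StrongAssumption U m L) : 0 < L := h.2.1.trans_le h.2.2.1

lemma mul_norm_sub_sq_le_inner (h : StrongAssumption U m L) (x y : Euc d) :
    m * ‖x - y‖ ^ 2 ≤ ⟪gradient U x - gradient U y, x - y⟫ :=
  mul_norm_sub_sq_le_inner_of_quadratic_lower_bound (fun x y => (h.2.2.2.1 x y).1) x y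

lemma norm_gradient_sub_le (h : StrongAssumption U m L) (x y : Euc d) :
    ‖gradient U x - gradient U y‖ ≤ L * ‖x - y‖ :=
  norm_sub_le_of_quadratic_bounds h.const_pos
    (fun x y => (mul_nonneg (half_pos h.2.1).le (sq_nonneg _)).trans (h.2.2.2.1 x y).1)
    (fun x y => (h.2.2.2.1 x y).2) x y

lemma norm_gradient_le (h : StrongAssumption U m L) (x : Euc d) : ‖gradient U x‖ ≤ L * ‖x‖ := by
  simpa only [h.2.2.2.2, sub_zero] using h.norm_gradient_sub_le x 0

lemma lipschitzWith_gradient (h : StrongAssumption U m L) :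
    LipschitzWith L.toNNReal (gradient U) := by
  refine LipschitzWith.of_dist_le_mul fun x y => ?_
  rw [dist_eq_norm, dist_eq_norm, Real.coe_toNNReal _ h.const_pos.le]
  exact h.norm_gradient_sub_le x y

lemma continuous_gradient (h : StrongAssumption U m L) : Continuous (gradient U) :=
  h.lipschitzWith_gradient.continuous

lemma measurable_gradient (h : StrongAssumption U m L) : Measurable (gradient U) :=
  h.continuous_gradient.measurable

lemma continuous (h : StrongAssumption U m L) : Continuous U := h.1.continuous

lemma hasGradientAt (h : StrongAssumption U m L) (x : Euc d) :
    HasGradientAt U (gradient U x) x :=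
  (h.1.differentiable (by norm_num) x).hasGradientAt

lemma add_mul_norm_sq_le (h : StrongAssumption U m L) (x : Euc d) :
    U 0 + m / 2 * ‖x‖ ^ 2 ≤ U x := by
  have := (h.2.2.2.1 0 x).1
  rw [h.2.2.2.2, inner_zero_left, zero_sub, norm_neg] at this
  linarith

end StrongAssumption

/-! ### Gaussian and Gibbs measures -/

section Gaussian

variable {E : Type*} [NormedAddCommGroup E] [InnerProductSpace ℝ E] [FiniteDimensional ℝ E]
  [MeasurableSpace E] [BorelSpace E]

lemma enorm_sq_eq_ofReal_norm_sq {G : Type*} [NormedAddCommGroup G] (x : G) :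
    ‖x‖ₑ ^ 2 = ENNReal.ofReal (‖x‖ ^ 2) := by
  rw [← ofReal_norm, ENNReal.ofReal_pow (norm_nonneg _)]

lemma stdGaussian_eq (d : ℕ) : stdGaussian d = stdGaussian (Euc d) := by
  rw [← map_pi_eq_stdGaussian]
  rfl

instance (d : ℕ) : IsProbabilityMeasure (stdGaussian d) := by
  rw [stdGaussian_eq]
  infer_instance

lemma integral_norm_sq_stdGaussian :
    ∫ z, ‖z‖ ^ 2 ∂(stdGaussian E) = Module.finrank ℝ E := by
  set b := stdOrthonormalBasis ℝ E
  have hmemLp (i) : MemLp (innerSL ℝ (b i)) 2 (stdGaussian E) :=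
    (innerSL ℝ (b i)).comp_memLp' (IsGaussian.memLp_id _ 2 (by simp))
  have hcoord (i) : ∫ z, ⟪b i, z⟫ ^ 2 ∂(stdGaussian E) = 1 := by
    have hvar := variance_dual_stdGaussian (innerSL ℝ (b i))
    rw [variance_of_integral_eq_zero (hmemLp i).aemeasurable (integral_strongDual_stdGaussian _),
      innerSL_apply_norm, b.norm_eq_one, one_pow] at hvar
    exact hvar
  simp_rw [← b.sum_sq_inner_right]
  have hint (i) : Integrable (fun z => ⟪b i, z⟫ ^ 2) (stdGaussian E) := (hmemLp i).integrable_sq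
  rw [integral_finsetSum _ fun i _ => hint i]
  simp [hcoord]

lemma lintegral_enorm_add_smul_sq_stdGaussian (a : E) (c : ℝ) :
    ∫⁻ z, ‖a + c • z‖ₑ ^ 2 ∂(stdGaussian E)
      = ENNReal.ofReal (‖a‖ ^ 2 + c ^ 2 * Module.finrank ℝ E) := by
  have hmemLp : MemLp (fun z : E => z) 2 (stdGaussian E) := IsGaussian.memLp_id _ 2 (by simp)
  have hint : Integrable (fun z : E => z) (stdGaussian E) := hmemLp.integrable one_le_two
  have hexpand (z : E) : ‖a + c • z‖ ^ 2 = ‖a‖ ^ 2 + 2 * c * ⟪a, z⟫ + c ^ 2 * ‖z‖ ^ 2 := by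
    rw [norm_add_sq_real, inner_smul_right, norm_smul, Real.norm_eq_abs, mul_pow, sq_abs]
    ring
  have hcross : Integrable (fun z => 2 * c * ⟪a, z⟫) (stdGaussian E) :=
    (hint.const_inner a).const_mul _
  have hsq : Integrable (fun z => c ^ 2 * ‖z‖ ^ 2) (stdGaussian E) :=
    (hmemLp.integrable_norm_pow two_ne_zero).const_mul _
  have hlin : Integrable (fun z => ‖a‖ ^ 2 + 2 * c * ⟪a, z⟫) (stdGaussian E) :=
    (integrable_const _).add hcross
  have hmean : ∫ z, ‖a + c • z‖ ^ 2 ∂(stdGaussian E)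
      = ‖a‖ ^ 2 + c ^ 2 * Module.finrank ℝ E := by
    simp_rw [hexpand]
    rw [integral_add hlin hsq, integral_add (integrable_const _) hcross, integral_const_mul,
      integral_const_mul, integral_norm_sq_stdGaussian, integral_inner hint,
      integral_id_stdGaussian]
    simp
  simp_rw [enorm_sq_eq_ofReal_norm_sq]
  rw [← hmean, ofReal_integral_eq_lintegral_ofReal _ (ae_of_all _ fun _ => by positivity)]
  exact (hlin.add hsq).congr (ae_of_all _ fun z => (hexpand z).symm)

variable (E) in
/-- The centred Gaussian law on `E` with covariance `t • id`: the law of Brownian motion at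
time `t`. -/
def isotropicGaussian (t : ℝ) : Measure E := (stdGaussian E).map fun z => √t • z

instance isProbabilityMeasure_isotropicGaussian (t : ℝ) :
    IsProbabilityMeasure (isotropicGaussian E t) :=
  Measure.isProbabilityMeasure_map (by fun_prop)

lemma charFun_isotropicGaussian {t : ℝ} (ht : 0 ≤ t) (u : E) :
    charFun (isotropicGaussian E t) u = Complex.exp (-(t * ‖u‖ ^ 2) / 2) := by
  rw [isotropicGaussian, charFun_map_smul, charFun_stdGaussian, norm_smul, Real.norm_eq_abs,
    abs_of_nonneg (Real.sqrt_nonneg _)]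
  congr 2
  push_cast
  rw [mul_pow, ← Complex.ofReal_pow, Real.sq_sqrt ht]

lemma isotropicGaussian_zero : isotropicGaussian E 0 = Measure.dirac 0 := by
  simp [isotropicGaussian, Measure.map_const]

lemma isotropicGaussian_conv {s t : ℝ} (hs : 0 ≤ s) (ht : 0 ≤ t) :
    (isotropicGaussian E s).conv (isotropicGaussian E t) = isotropicGaussian E (s + t) := by
  refine Measure.ext_of_charFun (funext fun u => ?_)
  rw [charFun_conv, charFun_isotropicGaussian hs, charFun_isotropicGaussian ht,
    charFun_isotropicGaussian (add_nonneg hs ht), ← Complex.exp_add]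
  congr 1
  push_cast
  ring

lemma lintegral_enorm_sq_isotropicGaussian {t : ℝ} (ht : 0 ≤ t) :
    ∫⁻ z, ‖z‖ₑ ^ 2 ∂(isotropicGaussian E t) = ENNReal.ofReal (t * Module.finrank ℝ E) := by
  rw [isotropicGaussian, lintegral_map (by fun_prop) (by fun_prop)]
  simpa [Real.sq_sqrt ht] using lintegral_enorm_add_smul_sq_stdGaussian (0 : E) √t

lemma integrable_exp_neg_mul_norm_sq {b : ℝ} (hb : 0 < b) :
    Integrable (fun x : E => Real.exp (-b * ‖x‖ ^ 2)) := by
  have := GaussianFourier.integrable_cexp_neg_mul_sq_norm_add (V := E) (b := b) (by simpa) 0 0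
  refine this.norm.congr (ae_of_all _ fun z => ?_)
  simp [Complex.norm_exp, ← Complex.ofReal_pow]

end Gaussian

section Gibbs

variable {d : ℕ} {U : Euc d → ℝ}

lemma lintegral_ofReal_exp_neg_ne_zero (hU : Integrable fun x => Real.exp (-U x)) :
    ∫⁻ x, ENNReal.ofReal (Real.exp (-U x)) ≠ 0 := by
  rw [← ofReal_integral_eq_lintegral_ofReal hU (ae_of_all _ fun _ => (Real.exp_pos _).le)]
  simpa using integral_exp_pos hU

lemma lintegral_ofReal_exp_neg_ne_top (hU : Integrable fun x => Real.exp (-U x)) :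
    ∫⁻ x, ENNReal.ofReal (Real.exp (-U x)) ≠ ∞ := by
  rw [← ofReal_integral_eq_lintegral_ofReal hU (ae_of_all _ fun _ => (Real.exp_pos _).le)]
  exact ENNReal.ofReal_ne_top

lemma isProbabilityMeasure_gibbs (hU : Integrable fun x => Real.exp (-U x)) :
    IsProbabilityMeasure (gibbs U) := by
  constructor
  rw [gibbs, Measure.smul_apply, withDensity_apply _ MeasurableSet.univ, setLIntegral_univ,
    smul_eq_mul, ENNReal.inv_mul_cancel (lintegral_ofReal_exp_neg_ne_zero hU)
    (lintegral_ofReal_exp_neg_ne_top hU)]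

lemma integral_gibbs {G : Type*} [NormedAddCommGroup G] [NormedSpace ℝ G]
    (hU : Integrable fun x => Real.exp (-U x)) (f : Euc d → G) :
    ∫ x, f x ∂(gibbs U) = (∫ x, Real.exp (-U x))⁻¹ • ∫ x, Real.exp (-U x) • f x := by
  rw [gibbs, integral_smul_measure, integral_withDensity_eq_integral_toReal_smul₀
      hU.aemeasurable.ennreal_ofReal (ae_of_all _ fun _ => ENNReal.ofReal_lt_top),
    ← ofReal_integral_eq_lintegral_ofReal hU (ae_of_all _ fun _ => (Real.exp_pos _).le),
    ENNReal.toReal_inv, ENNReal.toReal_ofReal (integral_nonneg fun _ => (Real.exp_pos _).le)]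
  simp_rw [ENNReal.toReal_ofReal (Real.exp_pos _).le]

lemma integrable_gibbs {G : Type*} [NormedAddCommGroup G] [NormedSpace ℝ G]
    (hU : Integrable fun x => Real.exp (-U x)) {f : Euc d → G}
    (hf : Integrable fun x => Real.exp (-U x) • f x) : Integrable f (gibbs U) := by
  refine Integrable.smul_measure ?_ (by simpa using lintegral_ofReal_exp_neg_ne_zero hU)
  rw [integrable_withDensity_iff_integrable_smul₀' hU.aemeasurable.ennreal_ofReal
    (ae_of_all _ fun _ => ENNReal.ofReal_lt_top)]
  simpa only [ENNReal.toReal_ofReal (Real.exp_pos _).le] using hf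

lemma gibbs_absolutelyContinuous : gibbs U ≪ volume :=
  (withDensity_absolutelyContinuous _ _).smul_left _

lemma charFun_gibbs_mul_norm_sq {b : ℝ} (hb : 0 < b) (u : Euc d) :
    charFun (gibbs fun x => b * ‖x‖ ^ 2) u = Complex.exp (-‖u‖ ^ 2 / (4 * b)) := by
  have hint : Integrable fun x : Euc d => Real.exp (-(b * ‖x‖ ^ 2)) := by
    simpa only [neg_mul] using integrable_exp_neg_mul_norm_sq hb
  have hconst : ((∫ x : Euc d, Real.exp (-(b * ‖x‖ ^ 2)) : ℝ) : ℂ)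
      = (Real.pi / b) ^ (Module.finrank ℝ (Euc d) / 2 : ℂ) := by
    rw [← GaussianFourier.integral_cexp_neg_mul_sq_norm (by simpa), ← integral_complex_ofReal]
    congr with x
    push_cast
    rw [neg_mul]
  have hne : ((∫ x : Euc d, Real.exp (-(b * ‖x‖ ^ 2)) : ℝ) : ℂ) ≠ 0 := by
    exact_mod_cast (integral_exp_pos hint).ne'
  have hintegrand (x : Euc d) : Real.exp (-(b * ‖x‖ ^ 2)) • Complex.exp (⟪x, u⟫ * Complex.I)
      = Complex.exp (-(b : ℂ) * ‖x‖ ^ 2 + Complex.I * ⟪u, x⟫) := by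
    rw [Complex.real_smul, Complex.ofReal_exp, ← Complex.exp_add, real_inner_comm]
    push_cast
    congr 1
    ring
  rw [charFun_apply, integral_gibbs hint]
  simp_rw [hintegrand]
  rw [GaussianFourier.integral_cexp_neg_mul_sq_norm_add (by simpa), ← hconst, Complex.real_smul,
    Complex.ofReal_inv, inv_mul_cancel_left₀ hne, Complex.I_sq, neg_one_mul]

lemma isotropicGaussian_eq_gibbs {t : ℝ} (ht : 0 < t) :
    isotropicGaussian (Euc d) t = gibbs fun x => (2 * t)⁻¹ * ‖x‖ ^ 2 := by
  have hb : 0 < (2 * t)⁻¹ := by positivity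
  have := isProbabilityMeasure_gibbs (d := d) (U := fun x => (2 * t)⁻¹ * ‖x‖ ^ 2)
    (by simpa only [neg_mul] using integrable_exp_neg_mul_norm_sq hb)
  refine Measure.ext_of_charFun (funext fun u => ?_)
  have ht' : (t : ℂ) ≠ 0 := by exact_mod_cast ht.ne'
  rw [charFun_isotropicGaussian ht.le, charFun_gibbs_mul_norm_sq hb]
  congr 1
  push_cast
  field_simp
  ring

end Gibbs

namespace StrongAssumption

variable {d : ℕ} {U : Euc d → ℝ} {m L : ℝ}

lemma integrable_norm_pow_mul_exp_neg (h : StrongAssumption U m L) (n : ℕ) :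
    Integrable fun x => ‖x‖ ^ (2 * n) * Real.exp (-U x) := by
  have hm := h.2.1
  have hU := h.continuous
  have hpow (x : Euc d) :
      ‖x‖ ^ (2 * n) ≤ (4 / m) ^ n * n.factorial * Real.exp (m / 4 * ‖x‖ ^ 2) := by
    have := Real.pow_div_factorial_le_exp (m / 4 * ‖x‖ ^ 2) (by positivity) n
    calc ‖x‖ ^ (2 * n)
        = (4 / m) ^ n * n.factorial * ((m / 4 * ‖x‖ ^ 2) ^ n / n.factorial) := by
          rw [mul_pow, ← pow_mul, div_pow, div_pow]
          field_simp
      _ ≤ _ := by gcongr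
  have hexp (x : Euc d) :
      Real.exp (-U x) ≤ Real.exp (-U 0) * Real.exp (-(m / 2) * ‖x‖ ^ 2) := by
    rw [← Real.exp_add]
    exact Real.exp_le_exp.2 (by linarith [h.add_mul_norm_sq_le x])
  refine ((integrable_exp_neg_mul_norm_sq (b := m / 4) (by positivity)).const_mul
    ((4 / m) ^ n * n.factorial * Real.exp (-U 0))).mono' (by fun_prop) (ae_of_all _ fun x => ?_)
  rw [Real.norm_eq_abs, abs_of_nonneg (by positivity)]
  calc ‖x‖ ^ (2 * n) * Real.exp (-U x)
      ≤ ((4 / m) ^ n * n.factorial * Real.exp (m / 4 * ‖x‖ ^ 2)) *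
        (Real.exp (-U 0) * Real.exp (-(m / 2) * ‖x‖ ^ 2)) := by
        gcongr
        exacts [hpow x, hexp x]
    _ = (4 / m) ^ n * n.factorial * Real.exp (-U 0) *
        (Real.exp (m / 4 * ‖x‖ ^ 2) * Real.exp (-(m / 2) * ‖x‖ ^ 2)) := by ring
    _ = (4 / m) ^ n * n.factorial * Real.exp (-U 0) * Real.exp (-(m / 4) * ‖x‖ ^ 2) := by
        rw [← Real.exp_add]
        ring_nf

lemma integrable_exp_neg (h : StrongAssumption U m L) : Integrable fun x => Real.exp (-U x) := by
  simpa using h.integrable_norm_pow_mul_exp_neg 0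

lemma isProbabilityMeasure_gibbs (h : StrongAssumption U m L) : IsProbabilityMeasure (gibbs U) :=
  _root_.isProbabilityMeasure_gibbs h.integrable_exp_neg

lemma integrable_norm_pow_gibbs (h : StrongAssumption U m L) (n : ℕ) :
    Integrable (fun x => ‖x‖ ^ (2 * n)) (gibbs U) :=
  integrable_gibbs h.integrable_exp_neg <| by
    simpa only [smul_eq_mul, mul_comm] using h.integrable_norm_pow_mul_exp_neg n

lemma memLp_id_gibbs (h : StrongAssumption U m L) : MemLp (fun x => x) 4 (gibbs U) := by
  rw [← integrable_norm_rpow_iff (by fun_prop) (by norm_num) (by norm_num),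
    show (4 : ℝ≥0∞).toReal = ((4 : ℕ) : ℝ) by norm_num]
  simpa only [Real.rpow_natCast] using h.integrable_norm_pow_gibbs 2

end StrongAssumption

section SecondMoment

variable {α G : Type*} [MeasurableSpace α] [NormedAddCommGroup G]

lemma eLpNorm_two_sq (f : α → G) (μ : Measure α) :
    eLpNorm f 2 μ ^ 2 = ∫⁻ x, ‖f x‖ₑ ^ 2 ∂μ := by
  simpa using eLpNorm_nnreal_pow_eq_lintegral (f := f) (μ := μ) (p := 2) two_ne_zero

lemma eLpNorm_two_le_ofReal_iff {f : α → G} {μ : Measure α} {a : ℝ} (ha : 0 ≤ a) :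
    eLpNorm f 2 μ ≤ ENNReal.ofReal a ↔ ∫⁻ x, ‖f x‖ₑ ^ 2 ∂μ ≤ ENNReal.ofReal (a ^ 2) := by
  rw [← eLpNorm_two_sq, ENNReal.ofReal_pow ha, ENNReal.pow_le_pow_left_iff two_ne_zero]

lemma eLpNorm_two_isotropicGaussian_le {E : Type*} [NormedAddCommGroup E]
    [InnerProductSpace ℝ E] [FiniteDimensional ℝ E] [MeasurableSpace E] [BorelSpace E]
    {t : ℝ} (ht : 0 ≤ t) :
    eLpNorm (fun z : E => z) 2 (isotropicGaussian E t)
      ≤ ENNReal.ofReal √(t * Module.finrank ℝ E) := by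
  rw [eLpNorm_two_le_ofReal_iff (Real.sqrt_nonneg _), Real.sq_sqrt (by positivity),
    lintegral_enorm_sq_isotropicGaussian ht]

end SecondMoment

namespace StrongAssumption

variable {d : ℕ} {U : Euc d → ℝ} {m L : ℝ}

lemma norm_sq_mul_le_inner_gradient (h : StrongAssumption U m L) (x : Euc d) :
    m * ‖x‖ ^ 2 ≤ ⟪gradient U x, x⟫ := by
  simpa only [h.2.2.2.2, sub_zero] using h.mul_norm_sub_sq_le_inner x 0

lemma integrable_inner_mul_inner_gradient_mul_exp_neg (h : StrongAssumption U m L) (b : Euc d) :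
    Integrable fun x => ⟪b, x⟫ * (⟪gradient U x, b⟫ * Real.exp (-U x)) := by
  have hU := h.continuous
  have hg := h.continuous_gradient
  refine ((h.integrable_norm_pow_mul_exp_neg 1).const_mul (‖b‖ ^ 2 * L)).mono' (by fun_prop)
    (ae_of_all _ fun x => ?_)
  rw [norm_mul, norm_mul, Real.norm_eq_abs (Real.exp _), Real.abs_exp]
  calc ‖⟪b, x⟫‖ * (‖⟪gradient U x, b⟫‖ * Real.exp (-U x))
      ≤ (‖b‖ * ‖x‖) * ((L * ‖x‖ * ‖b‖) * Real.exp (-U x)) := by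
        gcongr
        · exact norm_inner_le_norm _ _
        · exact (norm_inner_le_norm _ _).trans (by gcongr; exact h.norm_gradient_le x)
    _ = ‖b‖ ^ 2 * L * (‖x‖ ^ (2 * 1) * Real.exp (-U x)) := by ring

lemma integrable_inner_mul_exp_neg (h : StrongAssumption U m L) (b : Euc d) :
    Integrable fun x => ⟪b, x⟫ * Real.exp (-U x) := by
  have hU := h.continuous
  refine ((h.integrable_exp_neg.add (h.integrable_norm_pow_mul_exp_neg 1)).const_mul ‖b‖).mono'
    (by fun_prop) (ae_of_all _ fun x => ?_)
  rw [norm_mul, Real.norm_eq_abs (Real.exp _), Real.abs_exp]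
  calc ‖⟪b, x⟫‖ * Real.exp (-U x) ≤ (‖b‖ * (1 + ‖x‖ ^ (2 * 1))) * Real.exp (-U x) := by
        gcongr
        refine (norm_inner_le_norm _ _).trans ?_
        gcongr
        rw [mul_one]
        nlinarith [sq_nonneg (‖x‖ - 1), norm_nonneg x]
    _ = ‖b‖ * (Real.exp (-U x) + ‖x‖ ^ (2 * 1) * Real.exp (-U x)) := by ring

lemma integral_inner_mul_inner_gradient_mul_exp_neg (h : StrongAssumption U m L) (b : Euc d) :
    ∫ x, ⟪b, x⟫ * (⟪gradient U x, b⟫ * Real.exp (-U x)) = ‖b‖ ^ 2 * ∫ x, Real.exp (-U x) := by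
  have hlin (x : Euc d) : fderiv ℝ (fun x => ⟪b, x⟫) x b = ‖b‖ ^ 2 := by
    rw [show (fun x => ⟪b, x⟫) = innerSL ℝ b from rfl, ContinuousLinearMap.fderiv,
      innerSL_apply_apply, real_inner_self_eq_norm_sq]
  have hderiv (x : Euc d) : HasFDerivAt (fun x => Real.exp (-U x))
      (Real.exp (-U x) • -innerSL ℝ (gradient U x)) x :=
    (h.hasGradientAt x).hasFDerivAt.neg.exp
  have hfderiv (x : Euc d) :
      fderiv ℝ (fun x => Real.exp (-U x)) x b = -(⟪gradient U x, b⟫ * Real.exp (-U x)) := by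
    rw [(hderiv x).fderiv]
    simp [mul_comm]
  have hparts := integral_mul_fderiv_eq_neg_fderiv_mul_of_integrable (μ := volume)
    (f := fun x => ⟪b, x⟫) (g := fun x => Real.exp (-U x)) (v := b)
    (by simpa only [hlin] using h.integrable_exp_neg.const_mul _)
    (by simpa only [hfderiv, mul_neg] using
      Integrable.fun_neg (h.integrable_inner_mul_inner_gradient_mul_exp_neg b))
    (h.integrable_inner_mul_exp_neg b) (fun x _ => (innerSL ℝ b).differentiableAt)
    (fun x _ => (hderiv x).differentiableAt)
  simpa only [hlin, hfderiv, mul_neg, integral_neg, neg_inj, integral_const_mul] using hparts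

lemma integral_inner_gradient_gibbs (h : StrongAssumption U m L) :
    ∫ x, ⟪gradient U x, x⟫ ∂(gibbs U) = d := by
  set b := stdOrthonormalBasis ℝ (Euc d)
  have hsum (x : Euc d) : Real.exp (-U x) • ⟪gradient U x, x⟫
      = ∑ i, ⟪b i, x⟫ * (⟪gradient U x, b i⟫ * Real.exp (-U x)) := by
    rw [← b.sum_inner_mul_inner, smul_eq_mul, Finset.mul_sum]
    exact Finset.sum_congr rfl fun i _ => by ring
  rw [integral_gibbs h.integrable_exp_neg]
  simp_rw [hsum]
  rw [integral_finsetSum _ fun i _ => h.integrable_inner_mul_inner_gradient_mul_exp_neg (b i)]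
  simp_rw [h.integral_inner_mul_inner_gradient_mul_exp_neg, b.norm_eq_one]
  have := (integral_exp_pos h.integrable_exp_neg).ne'
  simp
  field_simp

lemma eLpNorm_two_id_gibbs_le (h : StrongAssumption U m L) :
    eLpNorm (fun x => x) 2 (gibbs U) ≤ ENNReal.ofReal √(d / m) := by
  have hm := h.2.1
  have hg := h.continuous_gradient
  have hsq : Integrable (fun x => ‖x‖ ^ 2) (gibbs U) := h.integrable_norm_pow_gibbs 1
  have hinner : Integrable (fun x => ⟪gradient U x, x⟫) (gibbs U) := by
    refine (hsq.const_mul L).mono' (by fun_prop) (ae_of_all _ fun x => ?_)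
    calc ‖⟪gradient U x, x⟫‖ ≤ ‖gradient U x‖ * ‖x‖ := norm_inner_le_norm _ _
      _ ≤ (L * ‖x‖) * ‖x‖ := mul_le_mul_of_nonneg_right (h.norm_gradient_le x) (norm_nonneg x)
      _ = L * ‖x‖ ^ 2 := by ring
  rw [eLpNorm_two_le_ofReal_iff (Real.sqrt_nonneg _), Real.sq_sqrt (by positivity)]
  simp_rw [enorm_sq_eq_ofReal_norm_sq]
  rw [← ofReal_integral_eq_lintegral_ofReal hsq (ae_of_all _ fun _ => sq_nonneg _)]
  refine ENNReal.ofReal_le_ofReal ((le_div_iff₀' hm).2 ?_)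
  rw [← integral_const_mul, ← h.integral_inner_gradient_gibbs]
  exact integral_mono (hsq.const_mul m) hinner h.norm_sq_mul_le_inner_gradient

end StrongAssumption

/-! ### The Metropolis-adjusted Langevin step -/

section Metropolis

variable {S : Type*}

lemma lintegral_ite_le_unitInterval (a : unitInterval) (s t : ℝ≥0∞) :
    ∫⁻ u : unitInterval, (if u ≤ a then s else t)
      = ENNReal.ofReal a * s + ENNReal.ofReal (1 - a) * t := by
  have hsplit (u : unitInterval) : (if u ≤ a then s else t)
      = (Set.Iic a).indicator (fun _ => s) u + (Set.Ioi a).indicator (fun _ => t) u := by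
    rcases le_or_gt u a with hu | hu
    · simp [hu]
    · simp [hu, hu.not_ge]
  simp_rw [hsplit]
  rw [lintegral_add_left (by fun_prop (disch := measurability)),
    lintegral_indicator_const measurableSet_Iic, lintegral_indicator_const measurableSet_Ioi,
    unitInterval.volume_Iic, unitInterval.volume_Ioi, mul_comm s, mul_comm t]

/-- The Metropolis acceptance probability of the move `p.1 → p.2`, where `ℓ` is the logarithm of
the joint density of the current state and the proposal. -/
def metropolisAccept (ℓ : S × S → ℝ) (p : S × S) : unitInterval :=
  ⟨min 1 (Real.exp (ℓ p.swap - ℓ p)), by positivity, min_le_left _ _⟩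

/-- The Metropolis update from the state `p.1` with proposal `p.2`, the acceptance event being
decided by the uniform variable `u`. -/
def metropolisStep (ℓ : S × S → ℝ) (p : S × S) (u : unitInterval) : S :=
  if u ≤ metropolisAccept ℓ p then p.2 else p.1

lemma exp_mul_metropolisAccept (ℓ : S × S → ℝ) (p : S × S) :
    Real.exp (ℓ p) * metropolisAccept ℓ p = min (Real.exp (ℓ p)) (Real.exp (ℓ p.swap)) := by
  rw [metropolisAccept, mul_min_of_nonneg _ _ (Real.exp_pos _).le, mul_one, ← Real.exp_add,
    add_sub_cancel]

lemma one_sub_metropolisAccept_le (ℓ : S × S → ℝ) (p : S × S) :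
    1 - (metropolisAccept ℓ p : ℝ) ≤ |ℓ p.swap - ℓ p| := by
  rw [metropolisAccept, sub_le_comm, le_min_iff]
  constructor
  · linarith [abs_nonneg (ℓ p.swap - ℓ p)]
  · linarith [Real.add_one_le_exp (ℓ p.swap - ℓ p), neg_abs_le (ℓ p.swap - ℓ p)]

variable [MeasurableSpace S] {ℓ : S × S → ℝ}

lemma measurable_metropolisAccept (hℓ : Measurable ℓ) : Measurable (metropolisAccept ℓ) := by
  unfold metropolisAccept
  fun_prop

lemma measurable_metropolisStep (hℓ : Measurable ℓ) :
    Measurable fun q : (S × S) × unitInterval => metropolisStep ℓ q.1 q.2 := by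
  have := measurable_metropolisAccept hℓ
  unfold metropolisStep
  exact .ite (measurableSet_le (by fun_prop) (by fun_prop)) (by fun_prop) (by fun_prop)

lemma lintegral_metropolisAccept_mul_swap {lam : Measure S} [SFinite lam] (hℓ : Measurable ℓ)
    (k : ℝ≥0∞) {f : S → ℝ≥0∞} (hf : Measurable f) :
    ∫⁻ p, ENNReal.ofReal (metropolisAccept ℓ p) * f p.2
        ∂((lam.prod lam).withDensity fun p => k * ENNReal.ofReal (Real.exp (ℓ p)))
      = ∫⁻ p, ENNReal.ofReal (metropolisAccept ℓ p) * f p.1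
        ∂((lam.prod lam).withDensity fun p => k * ENNReal.ofReal (Real.exp (ℓ p))) := by
  have := measurable_metropolisAccept hℓ
  have hdens (p : S × S) (c : ℝ≥0∞) :
      k * ENNReal.ofReal (Real.exp (ℓ p)) * (ENNReal.ofReal (metropolisAccept ℓ p) * c)
        = k * (ENNReal.ofReal (min (Real.exp (ℓ p)) (Real.exp (ℓ p.swap))) * c) := by
    rw [← exp_mul_metropolisAccept, ENNReal.ofReal_mul (Real.exp_pos _).le]
    ring
  rw [lintegral_withDensity_eq_lintegral_mul _ (by fun_prop) (by fun_prop),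
    lintegral_withDensity_eq_lintegral_mul _ (by fun_prop) (by fun_prop), ← lintegral_prod_swap]
  simp only [Pi.mul_apply, hdens]
  simp only [Prod.swap_swap, Prod.snd_swap, min_comm]

lemma map_metropolisStep {lam : Measure S} [SFinite lam] (hℓ : Measurable ℓ) (k : ℝ≥0∞)
    {J : Measure (S × S)} (hJ : J = (lam.prod lam).withDensity
      fun p => k * ENNReal.ofReal (Real.exp (ℓ p))) :
    (J.prod volume).map (fun q : (S × S) × unitInterval => metropolisStep ℓ q.1 q.2)
      = J.map Prod.fst := by
  have := measurable_metropolisAccept hℓ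
  have hstep := measurable_metropolisStep hℓ
  have hadd (p : S × S) :
      ENNReal.ofReal (metropolisAccept ℓ p) + ENNReal.ofReal (1 - metropolisAccept ℓ p) = 1 := by
    rw [← ENNReal.ofReal_add unitInterval.nonneg' (unitInterval.one_minus_nonneg _),
      add_sub_cancel, ENNReal.ofReal_one]
  refine Measure.ext_of_lintegral _ fun f hf => ?_
  have hcond (p : S × S) : ∫⁻ u, f (metropolisStep ℓ p u)
      = ENNReal.ofReal (metropolisAccept ℓ p) * f p.2
        + ENNReal.ofReal (1 - metropolisAccept ℓ p) * f p.1 := by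
    simp_rw [← lintegral_ite_le_unitInterval, metropolisStep, apply_ite f]
  rw [lintegral_map hf hstep, lintegral_map hf measurable_fst,
    hJ, lintegral_prod (fun q : (S × S) × unitInterval => f (metropolisStep ℓ q.1 q.2))
      (hf.comp hstep).aemeasurable]
  simp_rw [hcond]
  rw [lintegral_add_left (by fun_prop), lintegral_metropolisAccept_mul_swap hℓ k hf,
    ← lintegral_add_left (by fun_prop)]
  simp_rw [← add_mul, hadd, one_mul]

end Metropolis

lemma map_withDensity_comp_of_measurePreserving {α β : Type*} [MeasurableSpace α]
    [MeasurableSpace β] {μ : Measure α} {ν : Measure β} {T : α → β} (hT : MeasurePreserving T μ ν)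
    {f : β → ℝ≥0∞} (hf : Measurable f) :
    (μ.withDensity fun x => f (T x)).map T = ν.withDensity f := by
  ext s hs
  rw [Measure.map_apply hT.measurable hs, withDensity_apply _ (hT.measurable hs),
    withDensity_apply _ hs, hT.setLIntegral_comp_preimage hs hf]

section Mala

variable {d : ℕ} {U : Euc d → ℝ} {m L : ℝ}

/-- The Euler step `x - t∇U(x) + w` of the Langevin diffusion over time `t`, from the state
`x = p.1` with Brownian increment `w = p.2` (of covariance `2t • id`). -/
def eulerStep (U : Euc d → ℝ) (t : ℝ) (p : Euc d × Euc d) : Euc d :=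
  p.1 - t • gradient U p.1 + p.2

/-- The logarithm, up to an additive constant, of the joint density of `x ∼ gibbs U` and of the
Euler step of length `ε` from `x`. -/
def eulerLogDensity (U : Euc d → ℝ) (ε : ℝ) (p : Euc d × Euc d) : ℝ :=
  -U p.1 - (4 * ε)⁻¹ * ‖p.2 - p.1 + ε • gradient U p.1‖ ^ 2

/-- The Metropolis-adjusted Langevin step from `q.1`, with Gaussian increment `q.2.1` and uniform
variable `q.2.2`. -/
def malaStep (U : Euc d → ℝ) (ε : ℝ) (q : Euc d × Euc d × unitInterval) : Euc d :=
  metropolisStep (eulerLogDensity U ε) (q.1, eulerStep U ε (q.1, q.2.1)) q.2.2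

lemma eulerLogDensity_eulerStep (U : Euc d → ℝ) (ε : ℝ) (p : Euc d × Euc d) :
    eulerLogDensity U ε (p.1, eulerStep U ε p) = -U p.1 + -((2 * (2 * ε))⁻¹ * ‖p.2‖ ^ 2) := by
  rw [eulerLogDensity, eulerStep, show p.1 - ε • gradient U p.1 + p.2 - p.1 + ε • gradient U p.1
    = p.2 by abel]
  ring_nf

lemma gibbs_eq_withDensity (hU : Measurable U) : gibbs U = volume.withDensity fun x =>
    (∫⁻ x, ENNReal.ofReal (Real.exp (-U x)))⁻¹ * ENNReal.ofReal (Real.exp (-U x)) := by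
  rw [gibbs, ← withDensity_smul _ (by fun_prop)]
  rfl

namespace StrongAssumption

lemma measurable_eulerStep (h : StrongAssumption U m L) (t : ℝ) : Measurable (eulerStep U t) := by
  have := h.measurable_gradient
  unfold eulerStep
  fun_prop

lemma measurable_eulerLogDensity (h : StrongAssumption U m L) (ε : ℝ) :
    Measurable (eulerLogDensity U ε) := by
  have := h.measurable_gradient
  have := h.continuous.measurable
  unfold eulerLogDensity
  fun_prop

lemma measurable_malaStep (h : StrongAssumption U m L) (ε : ℝ) : Measurable (malaStep U ε) := by
  have := h.measurable_eulerStep ε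
  exact (measurable_metropolisStep (h.measurable_eulerLogDensity ε)).comp
    (f := fun q : Euc d × Euc d × unitInterval => ((q.1, eulerStep U ε (q.1, q.2.1)), q.2.2))
    (by fun_prop)

lemma measurePreserving_prodMk_eulerStep (h : StrongAssumption U m L) (t : ℝ) :
    MeasurePreserving (fun p : Euc d × Euc d => (p.1, eulerStep U t p))
      (volume.prod volume) (volume.prod volume) :=
  (MeasurePreserving.id volume).skew_product (g := fun x w => eulerStep U t (x, w))
    (h.measurable_eulerStep t)
    (ae_of_all _ fun x => map_add_left_eq_self volume (x - t • gradient U x))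

lemma map_prodMk_eulerStep (h : StrongAssumption U m L) {ε : ℝ} (hε : 0 < ε) :
    ∃ k, ((gibbs U).prod (isotropicGaussian (Euc d) (2 * ε))).map
        (fun p => (p.1, eulerStep U ε p)) = (volume.prod volume).withDensity
          fun p => k * ENNReal.ofReal (Real.exp (eulerLogDensity U ε p)) := by
  have hU := h.continuous.measurable
  have hℓ := h.measurable_eulerLogDensity ε
  refine ⟨(∫⁻ x, ENNReal.ofReal (Real.exp (-U x)))⁻¹ *
    (∫⁻ x : Euc d, ENNReal.ofReal (Real.exp (-((2 * (2 * ε))⁻¹ * ‖x‖ ^ 2))))⁻¹, ?_⟩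
  rw [isotropicGaussian_eq_gibbs (by positivity), gibbs_eq_withDensity hU,
    gibbs_eq_withDensity (by fun_prop), prod_withDensity (by fun_prop) (by fun_prop),
    ← map_withDensity_comp_of_measurePreserving (h.measurePreserving_prodMk_eulerStep ε)
      (f := fun p => _ * ENNReal.ofReal (Real.exp (eulerLogDensity U ε p))) (by fun_prop)]
  simp_rw [eulerLogDensity_eulerStep, Real.exp_add, ENNReal.ofReal_mul (Real.exp_pos _).le,
    mul_mul_mul_comm]

lemma map_malaStep (h : StrongAssumption U m L) {ε : ℝ} (hε : 0 < ε) :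
    ((gibbs U).prod ((isotropicGaussian (Euc d) (2 * ε)).prod volume)).map (malaStep U ε)
      = gibbs U := by
  have := h.isProbabilityMeasure_gibbs
  have hℓ := h.measurable_eulerLogDensity ε
  have hpair := (measurable_fst (α := Euc d)).prodMk (h.measurable_eulerStep ε)
  have hassoc := measurePreserving_prodAssoc (gibbs U) (isotropicGaussian (Euc d) (2 * ε))
    (volume : Measure unitInterval)
  obtain ⟨k, hk⟩ := h.map_prodMk_eulerStep hε
  set J := (gibbs U).prod (isotropicGaussian (Euc d) (2 * ε))
  calc _ = (J.prod volume).map ((fun q : (Euc d × Euc d) × unitInterval =>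
          metropolisStep (eulerLogDensity U ε) q.1 q.2) ∘
            Prod.map (fun p => (p.1, eulerStep U ε p)) id) := by
        rw [← hassoc.map_eq, Measure.map_map (h.measurable_malaStep ε) hassoc.measurable]
        rfl
    _ = ((J.map fun p => (p.1, eulerStep U ε p)).prod volume).map
          fun q => metropolisStep (eulerLogDensity U ε) q.1 q.2 := by
        rw [← Measure.map_map (measurable_metropolisStep hℓ) (hpair.prodMap measurable_id),
          ← Measure.map_prod_map _ _ hpair measurable_id, Measure.map_id]
    _ = J.map Prod.fst := by
        rw [map_metropolisStep hℓ k hk, Measure.map_map measurable_fst hpair]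
        rfl
    _ = gibbs U := Measure.fst_prod

end StrongAssumption

end Mala

section Trapezoid

variable {F : Type*} [NormedAddCommGroup F] [InnerProductSpace ℝ F]

/-- The error `U(x) - U(y) + ½⟪g(x) + g(y), y - x⟫` of the trapezoidal rule computing the increment
of `U` from `x` to `y` from its gradient field `g`. -/
def trapezoidError (U : F → ℝ) (g : F → F) (x y : F) : ℝ :=
  U x - U y + 1 / 2 * ⟪g x + g y, y - x⟫

variable [CompleteSpace F] {U : F → ℝ} {g : F → F} {x : F}

lemma isLittleO_taylor_two_of_hasGradientAt (hU : ∀ y, HasGradientAt U (g y) y) {A : F →L[ℝ] F}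
    (hg : HasFDerivAt g A x) :
    (fun v => U (x + v) - U x - ⟪g x, v⟫ - 1 / 2 * ⟪A v, v⟫) =o[𝓝 0] fun v => ‖v‖ ^ 2 := by
  rw [hasFDerivAt_iff_isLittleO_nhds_zero] at hg
  refine Asymptotics.isLittleO_iff.2 fun c hc => ?_
  obtain ⟨r, hr, hball⟩ := Metric.eventually_nhds_iff_ball.1 (Asymptotics.isLittleO_iff.1 hg hc)
  filter_upwards [Metric.ball_mem_nhds 0 hr] with v hv
  rw [mem_ball_zero_iff] at hv
  let ψ (t : ℝ) : ℝ := U (x + t • v) - t * ⟪g x, v⟫ - t ^ 2 / 2 * ⟪A v, v⟫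
  have hψ (t : ℝ) : HasDerivAt ψ ⟪g (x + t • v) - g x - A (t • v), v⟫ t := by
    have hline : HasDerivAt (fun t : ℝ => x + t • v) v t := by
      simpa using ((hasDerivAt_id t).smul_const v).const_add x
    have hUline : HasDerivAt (fun t : ℝ => U (x + t • v)) ⟪g (x + t • v), v⟫ t := by
      have hUgrad := (hU (x + t • v)).hasFDerivAt
      exact hUgrad.comp_hasDerivAt t hline
    have := (hUline.sub ((hasDerivAt_id t).mul_const ⟪g x, v⟫)).sub
      (((hasDerivAt_pow 2 t).div_const 2).mul_const ⟪A v, v⟫)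
    refine this.congr_deriv ?_
    simp only [inner_sub_left, map_smul, real_inner_smul_left]
    push_cast
    ring
  have hbound (t : ℝ) (ht : t ∈ Set.Ico (0 : ℝ) 1) :
      ‖⟪g (x + t • v) - g x - A (t • v), v⟫‖ ≤ c * ‖v‖ ^ 2 := by
    have htv : ‖t • v‖ ≤ ‖v‖ := by
      rw [norm_smul, Real.norm_of_nonneg ht.1]
      exact mul_le_of_le_one_left (norm_nonneg v) ht.2.le
    calc ‖⟪g (x + t • v) - g x - A (t • v), v⟫‖
        ≤ ‖g (x + t • v) - g x - A (t • v)‖ * ‖v‖ := norm_inner_le_norm _ _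
      _ ≤ (c * ‖v‖) * ‖v‖ := by
          gcongr
          exact (hball _ (by rw [mem_ball_zero_iff]; exact htv.trans_lt hv)).trans (by gcongr)
      _ = c * ‖v‖ ^ 2 := by ring
  have hmvt := norm_image_sub_le_of_norm_deriv_le_segment_01'
    (fun t _ => (hψ t).hasDerivWithinAt) hbound
  rw [Real.norm_of_nonneg (by positivity : 0 ≤ ‖v‖ ^ 2)]
  refine (congrArg _ ?_).trans_le hmvt
  simp only [ψ, one_smul, zero_smul, add_zero]
  ring

lemma trapezoidError_isLittleO (hU : ∀ y, HasGradientAt U (g y) y)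
    (hg : DifferentiableAt ℝ g x) :
    (fun y => trapezoidError U g x y) =o[𝓝 x] fun y => ‖y - x‖ ^ 2 := by
  have hA := hg.hasFDerivAt
  set A := fderiv ℝ g x
  have htaylor := isLittleO_taylor_two_of_hasGradientAt hU hA
  have hinner : (fun v => ⟪g (x + v) - g x - A v, v⟫) =o[𝓝 0] fun v => ‖v‖ ^ 2 := by
    simp_rw [sq]
    refine Asymptotics.IsBigO.trans_isLittleO (.of_norm_le fun v => norm_inner_le_norm _ _)
      ((hasFDerivAt_iff_isLittleO_nhds_zero.1 hA).norm_norm.mul_isBigO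
        (Asymptotics.isBigO_refl _ _))
  have hsub : Tendsto (fun y => y - x) (𝓝 x) (𝓝 0) := by
    simpa using (continuous_id.sub continuous_const).tendsto x (f := fun y => y - x)
  refine (((hinner.const_mul_left (1 / 2)).sub htaylor).comp_tendsto hsub).congr_left fun y => ?_
  simp only [Function.comp_apply, trapezoidError, add_sub_cancel, inner_sub_left, inner_add_left]
  ring

end Trapezoid

section MalaError

variable {d : ℕ} {U : Euc d → ℝ} {m L : ℝ}

lemma eulerLogDensity_swap_sub {ε : ℝ} (hε : 0 < ε) (p : Euc d × Euc d) :
    eulerLogDensity U ε p.swap - eulerLogDensity U ε p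
      = trapezoidError U (gradient U) p.1 p.2
        + ε / 4 * (‖gradient U p.1‖ ^ 2 - ‖gradient U p.2‖ ^ 2) := by
  obtain ⟨x, y⟩ := p
  rw [eulerLogDensity, eulerLogDensity, trapezoidError, Prod.swap_prod_mk, ← neg_sub y x,
    norm_add_sq_real, norm_add_sq_real, norm_neg, inner_neg_left, inner_smul_right,
    inner_smul_right, norm_smul, norm_smul, inner_add_left, real_inner_comm (y - x),
    real_inner_comm (y - x), Real.norm_of_nonneg hε.le]
  field_simp
  ring

/-- The squared distance between the Metropolis-adjusted and the plain Euler step, averaged over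
the uniform variable that decides acceptance: `p.1` is the state and `p.2` the increment. -/
def malaError (U : Euc d → ℝ) (ε : ℝ) (p : Euc d × Euc d) : ℝ :=
  ‖eulerStep U ε p - p.1‖ ^ 2 *
    (1 - metropolisAccept (eulerLogDensity U ε) (p.1, eulerStep U ε p))

lemma malaError_nonneg (U : Euc d → ℝ) (ε : ℝ) (p : Euc d × Euc d) : 0 ≤ malaError U ε p :=
  mul_nonneg (sq_nonneg _) (unitInterval.one_minus_nonneg _)

lemma malaError_le (U : Euc d → ℝ) (ε : ℝ) (p : Euc d × Euc d) :
    malaError U ε p ≤ ‖eulerStep U ε p - p.1‖ ^ 2 *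
      |eulerLogDensity U ε (eulerStep U ε p, p.1) - eulerLogDensity U ε (p.1, eulerStep U ε p)| :=
  mul_le_mul_of_nonneg_left (one_sub_metropolisAccept_le _ _) (sq_nonneg _)

lemma lintegral_enorm_malaStep_sub_eulerStep (U : Euc d → ℝ) (ε : ℝ) (x w : Euc d) :
    ∫⁻ u, ‖malaStep U ε (x, w, u) - eulerStep U ε (x, w)‖ₑ ^ 2
      = ENNReal.ofReal (malaError U ε (x, w)) := by
  have hcases (u : unitInterval) : ‖malaStep U ε (x, w, u) - eulerStep U ε (x, w)‖ₑ ^ 2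
      = if u ≤ metropolisAccept (eulerLogDensity U ε) (x, eulerStep U ε (x, w)) then 0
        else ‖eulerStep U ε (x, w) - x‖ₑ ^ 2 := by
    rw [malaStep, metropolisStep]
    split_ifs
    · simp
    · rw [← enorm_neg, neg_sub]
  simp_rw [hcases]
  rw [lintegral_ite_le_unitInterval, mul_zero, zero_add, enorm_sq_eq_ofReal_norm_sq,
    ← ENNReal.ofReal_mul (unitInterval.one_minus_nonneg _), malaError, mul_comm]

namespace StrongAssumption

lemma measurable_malaError (h : StrongAssumption U m L) (ε : ℝ) : Measurable (malaError U ε) := by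
  have hstep := h.measurable_eulerStep ε
  have := (measurable_metropolisAccept (h.measurable_eulerLogDensity ε)).comp
    (measurable_fst.prodMk hstep)
  exact ((hstep.sub measurable_fst).norm.pow_const 2).mul (measurable_const.sub this.subtype_val)

lemma abs_trapezoidError_le (h : StrongAssumption U m L) (x y : Euc d) :
    |trapezoidError U (gradient U) x y| ≤ L * ‖y - x‖ ^ 2 := by
  have hm := h.2.1
  have hbounds := h.2.2.2.1 x y
  rw [norm_sub_rev x y] at hbounds
  have hmono := h.mul_norm_sub_sq_le_inner y x
  have hlip : ⟪gradient U y - gradient U x, y - x⟫ ≤ L * ‖y - x‖ ^ 2 :=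
    calc _ ≤ ‖gradient U y - gradient U x‖ * ‖y - x‖ := real_inner_le_norm _ _
      _ ≤ (L * ‖y - x‖) * ‖y - x‖ := by gcongr; exact h.norm_gradient_sub_le y x
      _ = L * ‖y - x‖ ^ 2 := by ring
  have hsplit : trapezoidError U (gradient U) x y = -(U y - U x - ⟪gradient U x, y - x⟫)
      + 1 / 2 * ⟪gradient U y - gradient U x, y - x⟫ := by
    simp only [trapezoidError, inner_add_left, inner_sub_left _ (gradient U x)]
    ring
  have : 0 ≤ m * ‖y - x‖ ^ 2 := by positivity
  rw [hsplit, abs_le]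
  constructor <;> linarith

lemma norm_eulerStep_sub_le (h : StrongAssumption U m L) {ε : ℝ} (hε : 0 ≤ ε) (hε1 : ε ≤ 1)
    (x z : Euc d) : ‖eulerStep U ε (x, √(2 * ε) • z) - x‖ ≤ √ε * (L * ‖x‖ + 2 * ‖z‖) := by
  have hsqrt : ε ≤ √ε := Real.le_sqrt_of_sq_le (by nlinarith)
  have hsqrt2 : √2 ≤ 2 := (Real.sqrt_le_left (by norm_num)).2 (by norm_num)
  calc ‖eulerStep U ε (x, √(2 * ε) • z) - x‖ = ‖√(2 * ε) • z - ε • gradient U x‖ := by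
        rw [eulerStep]
        congr 1
        abel
    _ ≤ √2 * √ε * ‖z‖ + ε * ‖gradient U x‖ := by
        refine (norm_sub_le _ _).trans_eq ?_
        rw [norm_smul, norm_smul, Real.norm_of_nonneg hε, Real.norm_of_nonneg (Real.sqrt_nonneg _),
          Real.sqrt_mul (by norm_num)]
    _ ≤ 2 * √ε * ‖z‖ + √ε * (L * ‖x‖) := by
        gcongr
        exact h.norm_gradient_le x
    _ = √ε * (L * ‖x‖ + 2 * ‖z‖) := by ring

lemma norm_eulerStep_sub_sq_le (h : StrongAssumption U m L) {ε : ℝ} (hε : 0 ≤ ε) (hε1 : ε ≤ 1)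
    (x z : Euc d) : ‖eulerStep U ε (x, √(2 * ε) • z) - x‖ ^ 2 ≤ ε * (L * ‖x‖ + 2 * ‖z‖) ^ 2 := by
  have := pow_le_pow_left₀ (norm_nonneg _) (h.norm_eulerStep_sub_le hε hε1 x z) 2
  rwa [mul_pow, Real.sq_sqrt hε] at this

lemma abs_norm_gradient_sq_sub_le (h : StrongAssumption U m L) {x y : Euc d} {b : ℝ}
    (hx : L * ‖x‖ ≤ b) (hxy : ‖y - x‖ ≤ b) :
    |‖gradient U x‖ ^ 2 - ‖gradient U y‖ ^ 2| ≤ (2 * L + L ^ 2) * b ^ 2 := by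
  have hL := h.const_pos
  have hb : 0 ≤ b := (norm_nonneg _).trans hxy
  have hgx := (h.norm_gradient_le x).trans hx
  have hdiff : |‖gradient U x‖ - ‖gradient U y‖| ≤ L * b := by
    refine (abs_norm_sub_norm_le _ _).trans ((h.norm_gradient_sub_le x y).trans ?_)
    rw [norm_sub_rev]
    gcongr
  have hsum : |‖gradient U x‖ + ‖gradient U y‖| ≤ (2 + L) * b := by
    rw [abs_of_nonneg (by positivity)]
    linarith [(abs_le.1 hdiff).1]
  calc _ = |‖gradient U x‖ + ‖gradient U y‖| * |‖gradient U x‖ - ‖gradient U y‖| := by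
        rw [sq_sub_sq, abs_mul]
    _ ≤ ((2 + L) * b) * (L * b) := by gcongr
    _ = _ := by ring

lemma malaError_le_mul_pow_four (h : StrongAssumption U m L) {ε : ℝ} (hε : 0 < ε) (hε1 : ε ≤ 1)
    (x z : Euc d) : malaError U ε (x, √(2 * ε) • z)
      ≤ ε ^ 2 * ((3 * L / 2 + L ^ 2 / 4) * (L * ‖x‖ + 2 * ‖z‖) ^ 4) := by
  have hL := h.const_pos
  have hstep := h.norm_eulerStep_sub_le hε.le hε1 x z
  have hstep_sq := h.norm_eulerStep_sub_sq_le hε.le hε1 x z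
  set b := L * ‖x‖ + 2 * ‖z‖
  have hb : 0 ≤ b := by positivity
  refine (malaError_le U ε _).trans ?_
  set y := eulerStep U ε (x, √(2 * ε) • z)
  have hlog : |eulerLogDensity U ε (y, x) - eulerLogDensity U ε (x, y)|
      ≤ ε * ((3 * L / 2 + L ^ 2 / 4) * b ^ 2) :=
    calc _ ≤ |trapezoidError U (gradient U) x y|
          + ε / 4 * |‖gradient U x‖ ^ 2 - ‖gradient U y‖ ^ 2| := by
          refine (congrArg _ (eulerLogDensity_swap_sub hε (x, y))).trans_le ?_
          refine (abs_add_le _ _).trans_eq ?_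
          rw [abs_mul, abs_of_pos (by positivity : 0 < ε / 4)]
      _ ≤ L * (ε * b ^ 2) + ε / 4 * ((2 * L + L ^ 2) * b ^ 2) := by
          gcongr
          · exact (h.abs_trapezoidError_le x y).trans (by gcongr)
          · exact h.abs_norm_gradient_sq_sub_le (le_add_of_nonneg_right (by positivity))
              (hstep.trans (mul_le_of_le_one_left hb (Real.sqrt_le_one.2 hε1)))
      _ = _ := by ring
  calc _ ≤ (ε * b ^ 2) * (ε * ((3 * L / 2 + L ^ 2 / 4) * b ^ 2)) := by gcongr
    _ = _ := by ring

end StrongAssumption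

end MalaError

lemma tendsto_eulerStep_nhdsGT_zero {d : ℕ} (U : Euc d → ℝ) (x z : Euc d) :
    Tendsto (fun ε => eulerStep U ε (x, √(2 * ε) • z)) (𝓝[>] 0) (𝓝 x) := by
  have hcont : Continuous fun ε => eulerStep U ε (x, √(2 * ε) • z) := by
    dsimp only [eulerStep]
    fun_prop
  simpa [eulerStep] using (hcont.tendsto 0).mono_left nhdsWithin_le_nhds

namespace StrongAssumption

variable {d : ℕ} {U : Euc d → ℝ} {m L : ℝ}

lemma ae_differentiableAt_gradient (h : StrongAssumption U m L) :
    ∀ᵐ x ∂(gibbs U), DifferentiableAt ℝ (gradient U) x :=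
  gibbs_absolutelyContinuous.ae_le h.lipschitzWith_gradient.ae_differentiableAt

lemma norm_eulerStep_sub_sq_isBigO (h : StrongAssumption U m L) (x z : Euc d) :
    (fun ε => ‖eulerStep U ε (x, √(2 * ε) • z) - x‖ ^ 2) =O[𝓝[>] 0] fun ε => ε := by
  refine .of_bound ((L * ‖x‖ + 2 * ‖z‖) ^ 2) ?_
  filter_upwards [Ioc_mem_nhdsGT (zero_lt_one' ℝ)] with ε hε
  rw [Real.norm_of_nonneg (sq_nonneg _), Real.norm_of_nonneg hε.1.le,
    mul_comm (_ ^ 2)]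
  exact h.norm_eulerStep_sub_sq_le hε.1.le hε.2 x z

lemma eulerLogDensity_sub_isLittleO (h : StrongAssumption U m L) {x : Euc d}
    (hx : DifferentiableAt ℝ (gradient U) x) (z : Euc d) :
    (fun ε => eulerLogDensity U ε (eulerStep U ε (x, √(2 * ε) • z), x)
      - eulerLogDensity U ε (x, eulerStep U ε (x, √(2 * ε) • z))) =o[𝓝[>] 0] fun ε => ε := by
  have hy := tendsto_eulerStep_nhdsGT_zero U x z
  have htrap : (fun ε => trapezoidError U (gradient U) x (eulerStep U ε (x, √(2 * ε) • z)))
      =o[𝓝[>] 0] fun ε => ε :=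
    ((trapezoidError_isLittleO h.hasGradientAt hx).comp_tendsto hy).trans_isBigO
      (h.norm_eulerStep_sub_sq_isBigO x z)
  have hgrad : Tendsto (fun ε => ‖gradient U x‖ ^ 2
      - ‖gradient U (eulerStep U ε (x, √(2 * ε) • z))‖ ^ 2) (𝓝[>] 0) (𝓝 0) := by
    have := (((h.continuous_gradient.tendsto x).comp hy).norm.pow 2).const_sub
      (‖gradient U x‖ ^ 2)
    rwa [sub_self] at this
  have hprod : (fun ε => ε / 4 * (‖gradient U x‖ ^ 2
      - ‖gradient U (eulerStep U ε (x, √(2 * ε) • z))‖ ^ 2)) =o[𝓝[>] 0] fun ε => ε := by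
    simpa [div_eq_inv_mul] using ((Asymptotics.isBigO_refl (fun ε : ℝ => ε) _).const_mul_left
      4⁻¹).mul_isLittleO ((Asymptotics.isLittleO_one_iff ℝ).2 hgrad)
  refine (htrap.add hprod).congr' ?_ .rfl
  filter_upwards [self_mem_nhdsWithin] with ε hε
  exact (eulerLogDensity_swap_sub hε (x, eulerStep U ε (x, √(2 * ε) • z))).symm

lemma malaError_isLittleO (h : StrongAssumption U m L) {x : Euc d}
    (hx : DifferentiableAt ℝ (gradient U) x) (z : Euc d) :
    (fun ε => malaError U ε (x, √(2 * ε) • z)) =o[𝓝[>] 0] fun ε => ε ^ 2 := by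
  have hprod := (h.norm_eulerStep_sub_sq_isBigO x z).mul_isLittleO
    (h.eulerLogDensity_sub_isLittleO hx z).norm_left
  simp_rw [← sq] at hprod
  refine Asymptotics.IsBigO.trans_isLittleO (.of_norm_le fun ε => ?_) hprod
  rw [Real.norm_of_nonneg (malaError_nonneg U ε _)]
  exact malaError_le U ε _

lemma integrable_add_mul_norm_pow_four (h : StrongAssumption U m L) :
    Integrable (fun p : Euc d × Euc d => (L * ‖p.1‖ + 2 * ‖p.2‖) ^ 4)
      ((gibbs U).prod (stdGaussian (Euc d))) := by
  have := h.isProbabilityMeasure_gibbs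
  have hL := h.const_pos
  have hx := h.memLp_id_gibbs.comp_fst (stdGaussian (Euc d))
  have hz := (IsGaussian.memLp_id (stdGaussian (Euc d)) 4 (by norm_num)).comp_snd (gibbs U)
  have := ((hx.norm.const_mul L).add (hz.norm.const_mul 2)).integrable_norm_pow (p := 4)
    (by norm_num)
  refine this.congr (ae_of_all _ fun p => ?_)
  simp only [Pi.add_apply, id]
  rw [Real.norm_of_nonneg (by positivity)]

lemma tendsto_lintegral_malaError (h : StrongAssumption U m L) :
    Tendsto (fun ε => ∫⁻ p, ENNReal.ofReal (malaError U ε (p.1, √(2 * ε) • p.2) / ε ^ 2)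
      ∂((gibbs U).prod (stdGaussian (Euc d)))) (𝓝[>] 0) (𝓝 0) := by
  have := h.isProbabilityMeasure_gibbs
  rw [← lintegral_zero (μ := (gibbs U).prod (stdGaussian (Euc d)))]
  refine tendsto_lintegral_filter_of_dominated_convergence
    (fun p => ENNReal.ofReal ((3 * L / 2 + L ^ 2 / 4) * (L * ‖p.1‖ + 2 * ‖p.2‖) ^ 4))
    (.of_forall fun ε => ?_) ?_ ?_ ?_
  · have := h.measurable_malaError ε
    fun_prop
  · filter_upwards [Ioc_mem_nhdsGT (zero_lt_one' ℝ)] with ε hε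
    refine ae_of_all _ fun p => ENNReal.ofReal_le_ofReal ?_
    rw [div_le_iff₀' (pow_pos hε.1 2)]
    exact h.malaError_le_mul_pow_four hε.1 hε.2 p.1 p.2
  · exact (h.integrable_add_mul_norm_pow_four.const_mul _).lintegral_lt_top.ne
  · filter_upwards [Measure.quasiMeasurePreserving_fst.ae h.ae_differentiableAt_gradient] with p hp
    rw [← ENNReal.ofReal_zero]
    exact ENNReal.tendsto_ofReal (h.malaError_isLittleO hp p.2).tendsto_div_nhds_zero

lemma lintegral_enorm_malaStep_sub_eulerStep_prod (h : StrongAssumption U m L) (ε : ℝ) :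
    ∫⁻ q, ‖malaStep U ε q - eulerStep U ε (q.1, q.2.1)‖ₑ ^ 2
        ∂((gibbs U).prod ((isotropicGaussian (Euc d) (2 * ε)).prod volume))
      = ∫⁻ p, ENNReal.ofReal (malaError U ε (p.1, √(2 * ε) • p.2))
        ∂((gibbs U).prod (stdGaussian (Euc d))) := by
  have := h.isProbabilityMeasure_gibbs
  have hmala := h.measurable_malaStep ε
  have heuler := h.measurable_eulerStep ε
  have herr := h.measurable_malaError ε
  rw [lintegral_prod _ (by fun_prop), lintegral_prod _ (by fun_prop)]
  refine lintegral_congr fun x => ?_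
  rw [lintegral_prod _ (by fun_prop)]
  simp_rw [lintegral_enorm_malaStep_sub_eulerStep]
  rw [isotropicGaussian, lintegral_map (by fun_prop) (by fun_prop)]

lemma eventually_eLpNorm_malaStep_sub_eulerStep_le (h : StrongAssumption U m L) {σ : ℝ}
    (hσ : 0 < σ) : ∀ᶠ ε in 𝓝[>] (0 : ℝ),
      eLpNorm (fun q => malaStep U ε q - eulerStep U ε (q.1, q.2.1)) 2
        ((gibbs U).prod ((isotropicGaussian (Euc d) (2 * ε)).prod volume))
      ≤ ENNReal.ofReal (σ * ε) := by
  filter_upwards [h.tendsto_lintegral_malaError.eventually_le_const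
    (ENNReal.ofReal_pos.2 (pow_pos hσ 2)), self_mem_nhdsWithin] with ε hle (hε : 0 < ε)
  rw [eLpNorm_two_le_ofReal_iff (by positivity), h.lintegral_enorm_malaStep_sub_eulerStep_prod]
  calc _ = ENNReal.ofReal (ε ^ 2) *
          ∫⁻ p, ENNReal.ofReal (malaError U ε (p.1, √(2 * ε) • p.2) / ε ^ 2)
            ∂((gibbs U).prod (stdGaussian (Euc d))) := by
        rw [← lintegral_const_mul' _ _ ENNReal.ofReal_ne_top]
        refine lintegral_congr fun p => ?_
        rw [← ENNReal.ofReal_mul (sq_nonneg ε), mul_div_cancel₀ _ (pow_ne_zero 2 hε.ne')]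
    _ ≤ ENNReal.ofReal (ε ^ 2) * ENNReal.ofReal (σ ^ 2) := by gcongr
    _ = _ := by rw [← ENNReal.ofReal_mul (sq_nonneg ε), mul_pow, mul_comm]

end StrongAssumption

/-! ### Langevin transitions with Gaussian increments -/

lemma StrongAssumption.eLpNorm_smul_gradient_gibbs_le {d : ℕ} {U : Euc d → ℝ} {m L : ℝ}
    (h : StrongAssumption U m L) {t : ℝ} (ht : 0 ≤ t) :
    eLpNorm (fun x => t • gradient U x) 2 (gibbs U) ≤ ENNReal.ofReal (t * (L * √(d / m))) := by
  have hL := h.const_pos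
  refine (eLpNorm_le_mul_eLpNorm_of_ae_le_mul (g := fun x => x) (c := t * L)
    (ae_of_all _ fun x => ?_) 2).trans ?_
  · rw [norm_smul, Real.norm_of_nonneg ht, mul_assoc]
    exact mul_le_mul_of_nonneg_left (h.norm_gradient_le x) ht
  · rw [← mul_assoc, ENNReal.ofReal_mul (p := t * L) (by positivity)]
    exact mul_le_mul_right h.eLpNorm_two_id_gibbs_le _

/-- The random map `Y` (with randomness `ν`) approximates in mean square the transition of the
Langevin diffusion over a time `t`: it preserves `gibbs U` exactly, and for a starting point of law
`gibbs U` it is within `e` of the Euler step driven by the increment `w` of `√2` times a Brownian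
motion. It replaces the diffusion itself, as the target of a synchronous coupling. -/
structure IsLangevinApprox {d : ℕ} (U : Euc d → ℝ) {R : Type*} [MeasurableSpace R]
    (ν : Measure R) (w : R → Euc d) (Y : Euc d × R → Euc d) (t e : ℝ) : Prop where
  isProbabilityMeasure : IsProbabilityMeasure ν
  measurable_increment : Measurable w
  measurable_step : Measurable Y
  map_increment : ν.map w = isotropicGaussian (Euc d) (2 * t)
  map_step : ((gibbs U).prod ν).map Y = gibbs U
  eLpNorm_step_sub_eulerStep_le :
    eLpNorm (fun p => Y p - eulerStep U t (p.1, w p.2)) 2 ((gibbs U).prod ν) ≤ ENNReal.ofReal e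

namespace IsLangevinApprox

variable {d : ℕ} {U : Euc d → ℝ} {m L : ℝ} {R R' : Type*} [MeasurableSpace R]
  [MeasurableSpace R'] {ν : Measure R} {ν' : Measure R'} {w : R → Euc d} {w' : R' → Euc d}
  {Y : Euc d × R → Euc d} {Y' : Euc d × R' → Euc d} {t t' e e' : ℝ}

lemma mono (hY : IsLangevinApprox U ν w Y t e) (he : e ≤ e') : IsLangevinApprox U ν w Y t e' :=
  { hY with
    eLpNorm_step_sub_eulerStep_le :=
      hY.eLpNorm_step_sub_eulerStep_le.trans (ENNReal.ofReal_le_ofReal he) }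

lemma zero (h : StrongAssumption U m L) :
    IsLangevinApprox U (Measure.dirac ()) (fun _ => 0) Prod.fst 0 0 where
  isProbabilityMeasure := inferInstance
  measurable_increment := measurable_const
  measurable_step := measurable_fst
  map_increment := by simp [isotropicGaussian_zero]
  map_step := by
    have := h.isProbabilityMeasure_gibbs
    exact Measure.fst_prod
  eLpNorm_step_sub_eulerStep_le := by simp [eulerStep]

lemma measurePreserving_step (hY : IsLangevinApprox U ν w Y t e) :
    MeasurePreserving Y ((gibbs U).prod ν) (gibbs U) :=
  ⟨hY.measurable_step, hY.map_step⟩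

lemma eLpNorm_step_sub_start_le (hY : IsLangevinApprox U ν w Y t e) (h : StrongAssumption U m L)
    (ht : 0 ≤ t) (he : 0 ≤ e) :
    eLpNorm (fun p => Y p - p.1) 2 ((gibbs U).prod ν)
      ≤ ENNReal.ofReal (e + t * (L * √(d / m)) + √(2 * t * d)) := by
  have := h.isProbabilityMeasure_gibbs
  have := hY.isProbabilityMeasure
  have hL := h.const_pos
  have hg := h.measurable_gradient
  have hw := hY.measurable_increment
  have hYm := hY.measurable_step
  have heuler := h.measurable_eulerStep t
  have hgrad := (eLpNorm_comp_measurePreserving (p := 2) (g := fun x => t • gradient U x)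
    (by fun_prop) (measurePreserving_fst (μ := gibbs U) (ν := ν))).trans_le
    (h.eLpNorm_smul_gradient_gibbs_le ht)
  have hincr := (eLpNorm_comp_measurePreserving (p := 2) (g := fun z : Euc d => z) (by fun_prop)
    ((MeasurePreserving.mk hw hY.map_increment).comp
      (measurePreserving_snd (μ := gibbs U) (ν := ν)))).trans_le
    (eLpNorm_two_isotropicGaussian_le (by positivity))
  rw [finrank_euclideanSpace_fin] at hincr
  calc eLpNorm (fun p => Y p - p.1) 2 ((gibbs U).prod ν)
      = eLpNorm ((fun p => Y p - eulerStep U t (p.1, w p.2)) - (fun p => t • gradient U p.1)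
          + fun p => w p.2) 2 ((gibbs U).prod ν) := by
        congr 1
        funext p
        simp only [Pi.add_apply, Pi.sub_apply, eulerStep]
        abel
    _ ≤ _ := by
        rw [ENNReal.ofReal_add (by positivity) (by positivity),
          ENNReal.ofReal_add he (by positivity)]
        refine (eLpNorm_add_le (Measurable.aestronglyMeasurable (by fun_prop))
          (Measurable.aestronglyMeasurable (by fun_prop)) one_le_two).trans (add_le_add ?_ hincr)
        exact (eLpNorm_sub_le (by fun_prop) (Measurable.aestronglyMeasurable (by fun_prop))
          one_le_two).trans
          (add_le_add hY.eLpNorm_step_sub_eulerStep_le hgrad)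

lemma eLpNorm_smul_gradient_sub_le (hY : IsLangevinApprox U ν w Y t e)
    (h : StrongAssumption U m L) (ht : 0 ≤ t) (ht' : 0 ≤ t') (he : 0 ≤ e) :
    eLpNorm (fun p => t' • (gradient U p.1 - gradient U (Y p))) 2 ((gibbs U).prod ν)
      ≤ ENNReal.ofReal (t' * L * (e + t * (L * √(d / m)) + √(2 * t * d))) := by
  have hL := h.const_pos
  rw [ENNReal.ofReal_mul (by positivity)]
  refine (eLpNorm_le_mul_eLpNorm_of_ae_le_mul (ae_of_all _ fun p => ?_) 2).trans
    (mul_le_mul_right (hY.eLpNorm_step_sub_start_le h ht he) _)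
  rw [norm_smul, Real.norm_of_nonneg ht', mul_assoc, norm_sub_rev]
  exact mul_le_mul_of_nonneg_left (h.norm_gradient_sub_le _ _) ht'

lemma eLpNorm_comp_sub_eulerStep_le (hY : IsLangevinApprox U ν w Y t e)
    (hY' : IsLangevinApprox U ν' w' Y' t' e') (h : StrongAssumption U m L)
    (ht : 0 ≤ t) (ht' : 0 ≤ t') (he : 0 ≤ e) (he' : 0 ≤ e') :
    eLpNorm (fun p : Euc d × R × R' => Y' (Y (p.1, p.2.1), p.2.2)
        - eulerStep U (t + t') (p.1, w p.2.1 + w' p.2.2)) 2 ((gibbs U).prod (ν.prod ν'))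
      ≤ ENNReal.ofReal (e' + e + t' * L * (e + t * (L * √(d / m)) + √(2 * t * d))) := by
  have := h.isProbabilityMeasure_gibbs
  have := hY.isProbabilityMeasure
  have := hY'.isProbabilityMeasure
  have hL := h.const_pos
  have hg := h.measurable_gradient
  have hw := hY.measurable_increment
  have hw' := hY'.measurable_increment
  have hYm := hY.measurable_step
  have hYm' := hY'.measurable_step
  have heuler := h.measurable_eulerStep
  have hassoc := (measurePreserving_prodAssoc (gibbs U) ν ν').symm
  have hfst : MeasurePreserving (fun p : Euc d × R × R' => (p.1, p.2.1))
      ((gibbs U).prod (ν.prod ν')) ((gibbs U).prod ν) := measurePreserving_fst.comp hassoc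
  have hstep : MeasurePreserving (fun p : Euc d × R × R' => (Y (p.1, p.2.1), p.2.2))
      ((gibbs U).prod (ν.prod ν')) ((gibbs U).prod ν') :=
    (hY.measurePreserving_step.prod (.id ν')).comp hassoc
  have hlast := (eLpNorm_comp_measurePreserving (p := 2)
    (g := fun p : Euc d × R' => Y' p - eulerStep U t' (p.1, w' p.2)) (by fun_prop) hstep).trans_le
    hY'.eLpNorm_step_sub_eulerStep_le
  have hfirst := (eLpNorm_comp_measurePreserving (p := 2)
    (g := fun p : Euc d × R => Y p - eulerStep U t (p.1, w p.2)) (by fun_prop) hfst).trans_le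
    hY.eLpNorm_step_sub_eulerStep_le
  have hdrift := (eLpNorm_comp_measurePreserving (p := 2)
    (g := fun p => t' • (gradient U p.1 - gradient U (Y p))) (by fun_prop) hfst).trans_le
    (hY.eLpNorm_smul_gradient_sub_le h ht ht' he)
  rw [ENNReal.ofReal_add (by positivity) (by positivity), ENNReal.ofReal_add he' he]
  refine le_trans (le_of_eq_of_le ?_ ((eLpNorm_add_le (by fun_prop) (by fun_prop) one_le_two).trans
    (add_le_add_left (eLpNorm_add_le (by fun_prop) (by fun_prop) one_le_two) _)))
    (add_le_add (add_le_add hlast hfirst) hdrift)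
  congr 1
  funext p
  simp only [Pi.add_apply, Function.comp_apply, eulerStep]
  module

lemma comp (hY : IsLangevinApprox U ν w Y t e) (hY' : IsLangevinApprox U ν' w' Y' t' e')
    (h : StrongAssumption U m L) (ht : 0 ≤ t) (ht' : 0 ≤ t') (he : 0 ≤ e) (he' : 0 ≤ e') :
    IsLangevinApprox U (ν.prod ν') (fun r => w r.1 + w' r.2)
      (fun p => Y' (Y (p.1, p.2.1), p.2.2)) (t + t')
      (e' + e + t' * L * (e + t * (L * √(d / m)) + √(2 * t * d))) := by
  have := h.isProbabilityMeasure_gibbs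
  have := hY.isProbabilityMeasure
  have := hY'.isProbabilityMeasure
  have hw := hY.measurable_increment
  have hw' := hY'.measurable_increment
  have hYm := hY.measurable_step
  have hYm' := hY'.measurable_step
  refine ⟨inferInstance, by fun_prop, by fun_prop, ?_, ?_,
    hY.eLpNorm_comp_sub_eulerStep_le hY' h ht ht' he he'⟩
  · rw [mul_add, ← isotropicGaussian_conv (by positivity) (by positivity), ← hY.map_increment,
      ← hY'.map_increment, Measure.conv, Measure.map_prod_map _ _ hw hw',
      Measure.map_map (by fun_prop) (by fun_prop)]
    rfl
  · exact (hY'.measurePreserving_step.comp ((hY.measurePreserving_step.prod (.id ν')).comp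
      (measurePreserving_prodAssoc (gibbs U) ν ν').symm)).map_eq

end IsLangevinApprox

namespace StrongAssumption

variable {d : ℕ} {U : Euc d → ℝ} {m L : ℝ}

lemma exists_isLangevinApprox_nsmul (h : StrongAssumption U m L) {R : Type}
    [MeasurableSpace R] {ν : Measure R} {w : R → Euc d} {Y : Euc d × R → Euc d} {ε σ η : ℝ}
    (hε : 0 ≤ ε) (hσ : 0 ≤ σ) (hη : 0 ≤ η) (hY : IsLangevinApprox U ν w Y ε (σ * ε)) (n : ℕ)
    (hn : n * ε ≤ η) :
    ∃ (R' : Type) (_ : MeasurableSpace R') (ν' : Measure R') (w' : R' → Euc d)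
      (Y' : Euc d × R' → Euc d), IsLangevinApprox U ν' w' Y' (n * ε)
        (n * ε * (L * (η * (L * √(d / m)) + √(2 * η * d)) + σ) * (1 + ε * L) ^ n) := by
  have hL := h.const_pos
  induction n with
  | zero => exact ⟨Unit, _, _, _, _, by simpa using IsLangevinApprox.zero h⟩
  | succ n ih =>
    have hnη : n * ε ≤ η := le_trans (by push_cast; linarith) hn
    obtain ⟨R', _, ν', w', Y', hY'⟩ := ih hnη
    have hcomp := hY'.comp hY h (by positivity) hε (by positivity) (by positivity)
    rw [← add_one_mul, ← Nat.cast_succ] at hcomp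
    refine ⟨R' × R, inferInstance, _, _, _, hcomp.mono ?_⟩
    have hB : n * ε * (L * √(d / m)) + √(2 * (n * ε) * d) ≤ η * (L * √(d / m)) + √(2 * η * d) := by
      gcongr
    set B := η * (L * √(d / m)) + √(2 * η * d)
    set c := L * B + σ
    have hpow : 1 ≤ (1 + ε * L) ^ (n + 1) := one_le_pow₀ (by linarith [mul_nonneg hε hL.le])
    have : 0 ≤ B := by positivity
    calc _ ≤ σ * ε + n * ε * c * (1 + ε * L) ^ n
          + ε * L * (n * ε * c * (1 + ε * L) ^ n + B) := by
          linarith [mul_le_mul_of_nonneg_left hB (mul_nonneg hε hL.le)]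
      _ = n * ε * c * (1 + ε * L) ^ (n + 1) + ε * c * 1 := by ring
      _ ≤ n * ε * c * (1 + ε * L) ^ (n + 1) + ε * c * (1 + ε * L) ^ (n + 1) := by
          linarith [mul_le_mul_of_nonneg_left hpow (show 0 ≤ ε * c by positivity)]
      _ = _ := by push_cast; ring

lemma exists_isLangevinApprox (h : StrongAssumption U m L) {η σ : ℝ} (hη : 0 < η) (hσ : 0 < σ) :
    ∃ (R : Type) (_ : MeasurableSpace R) (ν : Measure R) (w : R → Euc d) (Y : Euc d × R → Euc d),
      IsLangevinApprox U ν w Y η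
        (η * (L * (η * (L * √(d / m)) + √(2 * η * d)) + σ) * Real.exp (η * L)) := by
  have hL := h.const_pos
  have hstep : Tendsto (fun n : ℕ => η / ((n : ℝ) + 1)) atTop (𝓝[>] 0) := by
    refine tendsto_nhdsWithin_iff.2 ⟨?_, .of_forall fun n => Set.mem_Ioi.2 (by positivity)⟩
    simpa [div_eq_mul_inv] using (tendsto_one_div_add_atTop_nhds_zero_nat (𝕜 := ℝ)).const_mul η
  obtain ⟨n, hn⟩ :=
    (hstep.eventually (h.eventually_eLpNorm_malaStep_sub_eulerStep_le hσ)).exists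
  set ε := η / ((n : ℝ) + 1) with hε
  have hε0 : 0 < ε := by positivity
  have hnε : ((n + 1 : ℕ) : ℝ) * ε = η := by
    rw [hε, Nat.cast_succ, mul_div_cancel₀ _ (by positivity)]
  have hmala : IsLangevinApprox U ((isotropicGaussian (Euc d) (2 * ε)).prod volume) Prod.fst
      (malaStep U ε) ε (σ * ε) :=
    ⟨inferInstance, measurable_fst, h.measurable_malaStep ε, Measure.fst_prod,
      h.map_malaStep hε0, hn⟩
  obtain ⟨R, hR, ν, w, Y, hY⟩ :=
    h.exists_isLangevinApprox_nsmul hε0.le hσ.le hη.le hmala (n + 1) hnε.le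
  rw [hnε] at hY
  have hexp : (1 + ε * L) ^ (n + 1) ≤ Real.exp (η * L) := by
    calc (1 + ε * L) ^ (n + 1) ≤ Real.exp (ε * L) ^ (n + 1) := by
          gcongr
          linarith [Real.add_one_le_exp (ε * L)]
      _ = Real.exp (η * L) := by rw [← Real.exp_nat_mul, ← mul_assoc, hnε]
  exact ⟨R, hR, ν, w, Y, hY.mono (by gcongr)⟩

end StrongAssumption

/-! ### Bernoulli selections and the PRLMC correction -/

lemma norm_add_sum_smul_sq {E : Type*} [NormedAddCommGroup E] [InnerProductSpace ℝ E] {ι : Type*}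
    [Fintype ι] (b : E) (v : ι → E) (c : ι → ℝ) :
    ‖b + ∑ i, c i • v i‖ ^ 2
      = ‖b‖ ^ 2 + 2 * ∑ i, c i * ⟪b, v i⟫ + ∑ i, ∑ j, c i * c j * ⟪v i, v j⟫ := by
  rw [norm_add_sq_real, ← real_inner_self_eq_norm_sq (∑ i, c i • v i)]
  simp only [inner_sum, sum_inner, real_inner_smul_left, real_inner_smul_right]
  congr 1
  rw [Finset.sum_comm]
  exact Finset.sum_congr rfl fun i _ => Finset.sum_congr rfl fun j _ => by ring

section Uncorrelated

variable {E : Type*} [NormedAddCommGroup E] [InnerProductSpace ℝ E] {Ω : Type*} [MeasurableSpace Ω]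
  {P : Measure Ω} {ι : Type*} [Fintype ι] {X : ι → Ω → ℝ}

lemma integrable_norm_add_sum_smul_sq [IsFiniteMeasure P] (hX : ∀ i, MemLp (X i) 2 P) (a : E)
    (v : ι → E) : Integrable (fun ω => ‖a + ∑ i, X i ω • v i‖ ^ 2) P :=
  have hsum : MemLp (fun ω => ∑ i, X i ω • v i) 2 P := memLp_finsetSum _ fun i _ =>
    (ContinuousLinearMap.toSpanSingleton ℝ (v i)).comp_memLp' (hX i)
  ((memLp_const a).add hsum).integrable_norm_pow two_ne_zero

lemma integral_norm_add_sum_smul_sq_of_centered [IsProbabilityMeasure P]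
    (hX : ∀ i, MemLp (X i) 2 P) (hmean : ∀ i, P[X i] = 0)
    (hcov : Pairwise fun i j => cov[X i, X j; P] = 0) (b : E) (v : ι → E) :
    ∫ ω, ‖b + ∑ i, X i ω • v i‖ ^ 2 ∂P = ‖b‖ ^ 2 + ∑ i, Var[X i; P] * ‖v i‖ ^ 2 := by
  have hmul : ∀ i j, Integrable (fun ω => X i ω * X j ω) P := fun i j =>
    (hX i).integrable_mul (hX j)
  have hcross : ∀ i j, ∫ ω, X i ω * X j ω ∂P = cov[X i, X j; P] := fun i j => by
    rw [covariance_eq_sub (hX i) (hX j), hmean, zero_mul, sub_zero]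
    rfl
  have hlin : ∀ i, Integrable (fun ω => X i ω * ⟪b, v i⟫) P := fun i =>
    ((hX i).integrable one_le_two).mul_const _
  have hquad : ∀ i j, Integrable (fun ω => X i ω * X j ω * ⟪v i, v j⟫) P := fun i j =>
    (hmul i j).mul_const _
  have hlin_sum : Integrable (fun ω => ‖b‖ ^ 2 + 2 * ∑ i, X i ω * ⟪b, v i⟫) P :=
    (integrable_const _).add ((integrable_finsetSum _ fun i _ => hlin i).const_mul 2)
  have hquad_sum : ∀ i, Integrable (fun ω => ∑ j, X i ω * X j ω * ⟪v i, v j⟫) P := fun i =>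
    integrable_finsetSum _ fun j _ => hquad i j
  simp_rw [norm_add_sum_smul_sq]
  rw [integral_add hlin_sum (integrable_finsetSum _ fun i _ => hquad_sum i),
    integral_add (integrable_const _) ((integrable_finsetSum _ fun i _ => hlin i).const_mul 2),
    integral_const_mul, integral_finsetSum _ fun i _ => hlin i,
    integral_finsetSum _ fun i _ => hquad_sum i]
  simp only [integral_finsetSum _ fun j _ => hquad _ j, integral_mul_const, hmean, hcross,
    integral_const, probReal_univ, one_smul, zero_mul, Finset.sum_const_zero, mul_zero, add_zero]
  congr 1
  refine Finset.sum_congr rfl fun i _ => ?_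
  rw [Finset.sum_eq_single i (fun j _ hj => by rw [hcov hj.symm, zero_mul]) (by simp),
    covariance_self (hX i).aemeasurable, real_inner_self_eq_norm_sq]

lemma integral_norm_add_sum_smul_sq [IsProbabilityMeasure P] (hX : ∀ i, MemLp (X i) 2 P)
    (hcov : Pairwise fun i j => cov[X i, X j; P] = 0) (a : E) (v : ι → E) :
    ∫ ω, ‖a + ∑ i, X i ω • v i‖ ^ 2 ∂P
      = ‖a + ∑ i, P[X i] • v i‖ ^ 2 + ∑ i, Var[X i; P] * ‖v i‖ ^ 2 := by
  have hint : ∀ i, Integrable (X i) P := fun i => (hX i).integrable one_le_two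
  have hcentered : ∀ i, P[fun ω => X i ω - P[X i]] = 0 := fun i => by
    rw [integral_sub (hint i) (integrable_const _)]
    simp
  have hexpand := integral_norm_add_sum_smul_sq_of_centered
    (fun i => (hX i).sub (memLp_const P[X i])) hcentered
    (fun i j hij => by
      rw [← hcov hij, ← covariance_sub_const_left (hint i), ← covariance_sub_const_right (hint j)]
      rfl)
    (a + ∑ i, P[X i] • v i) v
  calc ∫ ω, ‖a + ∑ i, X i ω • v i‖ ^ 2 ∂P
      = ∫ ω, ‖a + ∑ i, P[X i] • v i + ∑ i, (X i ω - P[X i]) • v i‖ ^ 2 ∂P := by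
        congr! 4 with ω
        simp only [sub_smul, Finset.sum_sub_distrib]
        abel
    _ = _ := by
        refine hexpand.trans ?_
        congr! 3 with i
        exact variance_sub_const (hX i).aestronglyMeasurable _

end Uncorrelated

lemma isProbabilityMeasure_bern {p : ℝ≥0∞} (hp : p ≤ 1) : IsProbabilityMeasure (bern p) :=
  ⟨by simp [bern, add_tsub_cancel_of_le hp]⟩

lemma integral_bern {p : ℝ≥0∞} (hp : p ≤ 1) (f : ℝ → ℝ) :
    ∫ x, f x ∂bern p = p.toReal * f 1 + (1 - p.toReal) * f 0 := by
  rw [bern, integral_add_measure, integral_smul_measure, integral_smul_measure, integral_dirac,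
    integral_dirac, ENNReal.toReal_sub_of_le hp (by simp)]
  · simp
  · exact (integrable_dirac (by simp)).smul_measure (ne_top_of_le_ne_top (by simp) hp)
  · exact (integrable_dirac (by simp)).smul_measure (by simp)

lemma memLp_id_bern {p : ℝ≥0∞} (hp : p ≤ 1) : MemLp id 2 (bern p) := by
  have := isProbabilityMeasure_bern hp
  refine MemLp.of_bound (by fun_prop) 1 ?_
  rw [bern, ae_add_measure_iff]
  exact ⟨Measure.ae_smul_measure (by simp [ae_dirac_eq]) _,
    Measure.ae_smul_measure (by simp [ae_dirac_eq]) _⟩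

lemma variance_id_bern {p : ℝ≥0∞} (hp : p ≤ 1) :
    Var[id; bern p] = p.toReal * (1 - p.toReal) := by
  have := isProbabilityMeasure_bern hp
  rw [variance_eq_integral (by fun_prop)]
  simp only [id, integral_bern hp]
  ring

/-- The Bernoulli variables of one PRLMC step: `K` independent selections of probability `1 / K`. -/
def bernoulliSelection (K : ℕ) : Measure (Fin K → ℝ) := .pi fun _ => bern (K : ℝ≥0∞)⁻¹

lemma inv_natCast_le_one {K : ℕ} (hK : 1 ≤ K) : (K : ℝ≥0∞)⁻¹ ≤ 1 :=
  ENNReal.inv_le_one.2 (by exact_mod_cast hK)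

lemma isProbabilityMeasure_bernoulliSelection {K : ℕ} (hK : 1 ≤ K) :
    IsProbabilityMeasure (bernoulliSelection K) := by
  have := isProbabilityMeasure_bern (inv_natCast_le_one hK)
  unfold bernoulliSelection
  infer_instance

lemma lintegral_enorm_add_sum_smul_sq_bernoulliSelection {E : Type*} [NormedAddCommGroup E]
    [InnerProductSpace ℝ E] {K : ℕ} (hK : 1 ≤ K) (a : E) (v : Fin K → E) :
    ∫⁻ h, ‖a + ∑ i, h i • v i‖ₑ ^ 2 ∂bernoulliSelection K
      = ENNReal.ofReal (‖a + (K : ℝ)⁻¹ • ∑ i, v i‖ ^ 2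
          + (K : ℝ)⁻¹ * (1 - (K : ℝ)⁻¹) * ∑ i, ‖v i‖ ^ 2) := by
  have hp := inv_natCast_le_one hK
  have := isProbabilityMeasure_bern hp
  have := isProbabilityMeasure_bernoulliSelection hK
  have heval : ∀ i, MeasurePreserving (Function.eval i) (bernoulliSelection K)
      (bern (K : ℝ≥0∞)⁻¹) := measurePreserving_eval _
  have hX : ∀ i, MemLp (Function.eval i) 2 (bernoulliSelection K) := fun i =>
    (memLp_id_bern hp).comp_measurePreserving (heval i)
  have hcov : Pairwise fun i j => cov[Function.eval i, Function.eval j; bernoulliSelection K] = 0 :=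
    fun i j hij => ((iIndepFun_pi fun _ => aemeasurable_id).indepFun hij).covariance_eq_zero
      (hX i) (hX j)
  have hmean : ∀ i, (bernoulliSelection K)[Function.eval i] = (K : ℝ)⁻¹ := fun i => by
    have hmap := integral_map (heval i).aemeasurable (f := id) (by fun_prop)
    rw [(heval i).map_eq, integral_bern hp] at hmap
    simpa using hmap.symm
  have hvar : ∀ i, Var[Function.eval i; bernoulliSelection K] = (K : ℝ)⁻¹ * (1 - (K : ℝ)⁻¹) :=
    fun i => by
      have hmap := (heval i).variance_fun_comp (f := id) (by fun_prop)
      rw [variance_id_bern hp] at hmap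
      simpa using hmap
  have hint := integral_norm_add_sum_smul_sq hX hcov a v
  simp only [hmean, hvar, ← Finset.smul_sum, ← Finset.mul_sum, Function.eval] at hint
  rw [← hint, ofReal_integral_eq_lintegral_ofReal]
  · simp only [enorm_sq_eq_ofReal_norm_sq]
  · exact integrable_norm_add_sum_smul_sq hX a v
  · exact ae_of_all _ fun _ => by positivity

lemma lintegral_enorm_sum_smul_sq_bernoulliSelection_le {E : Type*} [NormedAddCommGroup E]
    [InnerProductSpace ℝ E] {K : ℕ} (hK : 1 ≤ K) (v : Fin K → E) :
    ∫⁻ h, ‖∑ i, h i • v i‖ₑ ^ 2 ∂bernoulliSelection K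
      ≤ ENNReal.ofReal ((K : ℝ)⁻¹ * (2 - (K : ℝ)⁻¹)) * ∑ i, ‖v i‖ₑ ^ 2 := by
  have : (0 : ℝ) < K := by exact_mod_cast hK
  have hK₁ : (K : ℝ)⁻¹ ≤ 1 := inv_le_one_of_one_le₀ (by exact_mod_cast hK)
  have hmean : ‖(K : ℝ)⁻¹ • ∑ i, v i‖ ^ 2 ≤ (K : ℝ)⁻¹ * ∑ i, ‖v i‖ ^ 2 := by
    have hsum : ‖∑ i, v i‖ ^ 2 ≤ K * ∑ i, ‖v i‖ ^ 2 := by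
      simpa using (pow_le_pow_left₀ (norm_nonneg _) (norm_sum_le Finset.univ v) 2).trans
        sq_sum_le_card_mul_sum_sq
    rw [norm_smul, mul_pow, Real.norm_of_nonneg (by positivity)]
    calc _ ≤ (K : ℝ)⁻¹ ^ 2 * (K * ∑ i, ‖v i‖ ^ 2) := by gcongr
      _ = _ := by field_simp
  have hexact := lintegral_enorm_add_sum_smul_sq_bernoulliSelection hK 0 v
  simp only [zero_add] at hexact
  rw [hexact]
  simp only [enorm_sq_eq_ofReal_norm_sq]
  rw [← ENNReal.ofReal_sum_of_nonneg fun i _ => by positivity,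
    ← ENNReal.ofReal_mul (mul_nonneg (by positivity) (by linarith))]
  exact ENNReal.ofReal_le_ofReal (by linarith)

lemma sum_midpoint_moments_le {K : ℕ} (hK : 1 ≤ K) {η A D : ℝ} (hη : 0 ≤ η) (hA : 0 ≤ A)
    (hD : 0 ≤ D) :
    (K : ℝ)⁻¹ * (2 - (K : ℝ)⁻¹) * ∑ i : Fin K, ((i * η / K) ^ 2 * A + 2 * i * η / K * D)
      ≤ η * (2 - 2 / K) * (η * A / 3 + D) := by
  have hK₁ : (1 : ℝ) ≤ K := by exact_mod_cast hK
  have hsum : ∀ n : ℕ, ∑ i ∈ Finset.range n, ((i * η / K) ^ 2 * A + 2 * i * η / K * D)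
      = (n - 1) * n * (2 * n - 1) / 6 * (η / K) ^ 2 * A + (n - 1) * n * (η / K) * D := by
    intro n
    induction n with
    | zero => simp
    | succ n ih =>
      rw [Finset.sum_range_succ, ih]
      push_cast
      ring
  rw [Fin.sum_univ_eq_sum_range fun i : ℕ => ((i * η / K) ^ 2 * A + 2 * i * η / K * D), hsum K]
  have hgap : η * (2 - 2 / K) * (η * A / 3 + D) - (K : ℝ)⁻¹ * (2 - (K : ℝ)⁻¹)
      * ((K - 1) * K * (2 * K - 1) / 6 * (η / K) ^ 2 * A + (K - 1) * K * (η / K) * D)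
      = (K - 1) * (4 * K - 1) / (6 * K ^ 3) * η ^ 2 * A + (K - 1) / K ^ 2 * η * D := by
    field_simp
    ring
  have : (0 : ℝ) ≤ K - 1 := by linarith
  have : (0 : ℝ) ≤ 4 * K - 1 := by linarith
  refine sub_nonneg.1 (hgap ▸ ?_)
  positivity

/-- The random term by which a PRLMC step from `x` differs from the Euler step: the selected
differences between the gradient at `x` and the gradients at the midpoints. -/
def midpointCorrection {d : ℕ} (U : Euc d → ℝ) (η : ℝ) (K : ℕ) (x : Euc d) (h : Fin K → ℝ)
    (g : Fin K → Euc d) : Euc d :=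
  η • ∑ i, h i • (gradient U x - gradient U (prlmcMid U η K x g i))

/-- The law of the Bernoulli selections and midpoint Gaussians of one PRLMC step. -/
def midpointNoise (d K : ℕ) : Measure ((Fin K → ℝ) × (Fin K → Euc d)) :=
  (bernoulliSelection K).prod (.pi fun _ => stdGaussian d)

lemma isProbabilityMeasure_midpointNoise {d K : ℕ} (hK : 1 ≤ K) :
    IsProbabilityMeasure (midpointNoise d K) := by
  have := isProbabilityMeasure_bernoulliSelection hK
  unfold midpointNoise
  infer_instance

/-- The PRLMC step as a function of the current state and of the randomness, with the driving
Gaussian already scaled to have law `isotropicGaussian (Euc d) (2 * η)`. -/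
def prlmcMap {d : ℕ} (U : Euc d → ℝ) (η : ℝ) (K : ℕ)
    (p : Euc d × Euc d × (Fin K → ℝ) × (Fin K → Euc d)) : Euc d :=
  eulerStep U η (p.1, p.2.1) + midpointCorrection U η K p.1 p.2.2.1 p.2.2.2

lemma lintegral_enorm_prlmcMid_sub_sq {d K : ℕ} (U : Euc d → ℝ) {η : ℝ} (hη : 0 ≤ η) (x : Euc d)
    (i : Fin K) :
    ∫⁻ g, ‖prlmcMid U η K x g i - x‖ₑ ^ 2 ∂(Measure.pi fun _ => stdGaussian d)
      = ENNReal.ofReal ((i * η / K) ^ 2 * ‖gradient U x‖ ^ 2 + 2 * i * η / K * d) := by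
  have heval := measurePreserving_eval (fun _ : Fin K => stdGaussian d) i
  have hmid : ∀ g, prlmcMid U η K x g i - x
      = -(i * η / K) • gradient U x + √(2 * i * η / K) • g i := fun g => by
    simp only [prlmcMid]
    module
  simp_rw [hmid]
  rw [heval.lintegral_comp
    (f := fun z => ‖-(i * η / K) • gradient U x + √(2 * i * η / K) • z‖ₑ ^ 2) (by fun_prop),
    stdGaussian_eq, lintegral_enorm_add_smul_sq_stdGaussian, norm_smul, mul_pow,
    Real.sq_sqrt (by positivity), finrank_euclideanSpace_fin, Real.norm_eq_abs, sq_abs, neg_sq]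

namespace StrongAssumption

variable {d K : ℕ} {U : Euc d → ℝ} {m L η : ℝ}

lemma measurable_midpointCorrection (h : StrongAssumption U m L) (η : ℝ) (K : ℕ) :
    Measurable fun p : Euc d × (Fin K → ℝ) × (Fin K → Euc d) =>
      midpointCorrection U η K p.1 p.2.1 p.2.2 := by
  have hg := h.measurable_gradient
  unfold midpointCorrection prlmcMid
  fun_prop

lemma measurable_prlmcMap (h : StrongAssumption U m L) (η : ℝ) (K : ℕ) :
    Measurable (prlmcMap U η K) := by
  have heuler := h.measurable_eulerStep η
  have hcorr := h.measurable_midpointCorrection η K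
  unfold prlmcMap
  fun_prop

lemma prlmcKernel_eq_map (h : StrongAssumption U m L) (hK : 1 ≤ K) (x : Euc d) :
    prlmcKernel U η K x = ((isotropicGaussian (Euc d) (2 * η)).prod (midpointNoise d K)).map
      fun r => prlmcMap U η K (x, r) := by
  have := isProbabilityMeasure_bernoulliSelection hK
  have := isProbabilityMeasure_midpointNoise (d := d) hK
  have := h.measurable_prlmcMap η K
  have hnoise : MeasurePreserving
      (fun r : (Fin K → ℝ) × (Fin K → Euc d) × Euc d => (√(2 * η) • r.2.2, r.1, r.2.1))
      (prlmcNoise d K) ((isotropicGaussian (Euc d) (2 * η)).prod (midpointNoise d K)) := by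
    have hscale : MeasurePreserving (fun z : Euc d => √(2 * η) • z) (stdGaussian d)
        (isotropicGaussian (Euc d) (2 * η)) := ⟨by fun_prop, by rw [stdGaussian_eq]; rfl⟩
    exact ((hscale.prod (.id _)).comp Measure.measurePreserving_swap).comp
      (measurePreserving_prodAssoc (bernoulliSelection K) (.pi fun _ => stdGaussian d)
        (stdGaussian d)).symm
  rw [← hnoise.map_eq, Measure.map_map (by fun_prop) hnoise.measurable]
  unfold prlmcKernel
  congr 1
  funext r
  simp only [Function.comp_apply, prlmcStep, prlmcMap, eulerStep, midpointCorrection]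
  abel

lemma lintegral_enorm_smul_gradient_sub_prlmcMid_sq_le (h : StrongAssumption U m L) (hη : 0 ≤ η)
    (x : Euc d) (i : Fin K) :
    ∫⁻ g, ‖η • (gradient U x - gradient U (prlmcMid U η K x g i))‖ₑ ^ 2
        ∂(Measure.pi fun _ => stdGaussian d)
      ≤ ENNReal.ofReal ((η * L) ^ 2)
        * ENNReal.ofReal ((i * η / K) ^ 2 * (L * ‖x‖) ^ 2 + 2 * i * η / K * d) := by
  calc _ ≤ ∫⁻ g, ENNReal.ofReal ((η * L) ^ 2) * ‖prlmcMid U η K x g i - x‖ₑ ^ 2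
          ∂(Measure.pi fun _ => stdGaussian d) := by
        refine lintegral_mono fun g => ?_
        simp only [enorm_sq_eq_ofReal_norm_sq]
        rw [← ENNReal.ofReal_mul (by positivity), norm_smul, Real.norm_of_nonneg hη, norm_sub_rev,
          ← mul_pow, mul_assoc]
        gcongr
        exact h.norm_gradient_sub_le _ _
    _ ≤ _ := by
        rw [lintegral_const_mul' _ _ ENNReal.ofReal_ne_top, lintegral_enorm_prlmcMid_sub_sq U hη]
        gcongr
        exact h.norm_gradient_le x

lemma lintegral_enorm_midpointCorrection_sq_le (h : StrongAssumption U m L) (hK : 1 ≤ K)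
    (hη : 0 ≤ η) (x : Euc d) :
    ∫⁻ r, ‖midpointCorrection U η K x r.1 r.2‖ₑ ^ 2 ∂midpointNoise d K
      ≤ ENNReal.ofReal ((η * L) ^ 2 * (η * (2 - 2 / K) * (η * (L * ‖x‖) ^ 2 / 3 + d))) := by
  have := isProbabilityMeasure_bernoulliSelection hK
  have hg := h.measurable_gradient
  have hcorr := h.measurable_midpointCorrection η K
  have hK₁ : (K : ℝ)⁻¹ ≤ 1 := inv_le_one_of_one_le₀ (by exact_mod_cast hK)
  have hselect : ∀ g : Fin K → Euc d,
      ∫⁻ h, ‖midpointCorrection U η K x h g‖ₑ ^ 2 ∂bernoulliSelection K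
        ≤ ENNReal.ofReal ((K : ℝ)⁻¹ * (2 - (K : ℝ)⁻¹))
          * ∑ i, ‖η • (gradient U x - gradient U (prlmcMid U η K x g i))‖ₑ ^ 2 := fun g => by
    simp only [midpointCorrection, Finset.smul_sum, smul_comm η]
    exact lintegral_enorm_sum_smul_sq_bernoulliSelection_le hK _
  rw [midpointNoise, lintegral_prod_symm _ (by fun_prop)]
  calc _ ≤ ∫⁻ g, ENNReal.ofReal ((K : ℝ)⁻¹ * (2 - (K : ℝ)⁻¹))
          * ∑ i, ‖η • (gradient U x - gradient U (prlmcMid U η K x g i))‖ₑ ^ 2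
          ∂(Measure.pi fun _ => stdGaussian d) := lintegral_mono hselect
    _ ≤ ENNReal.ofReal ((K : ℝ)⁻¹ * (2 - (K : ℝ)⁻¹)) * ∑ i : Fin K, ENNReal.ofReal ((η * L) ^ 2)
        * ENNReal.ofReal ((i * η / K) ^ 2 * (L * ‖x‖) ^ 2 + 2 * i * η / K * d) := by
      rw [lintegral_const_mul' _ _ ENNReal.ofReal_ne_top, lintegral_finsetSum _ fun i _ => by
        unfold prlmcMid
        fun_prop]
      gcongr with i
      exact h.lintegral_enorm_smul_gradient_sub_prlmcMid_sq_le hη x i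
    _ ≤ _ := by
      rw [← Finset.mul_sum, ← ENNReal.ofReal_sum_of_nonneg fun i _ => by positivity,
        mul_left_comm, ← ENNReal.ofReal_mul (mul_nonneg (by positivity) (by linarith)),
        ← ENNReal.ofReal_mul (by positivity)]
      exact ENNReal.ofReal_le_ofReal (mul_le_mul_of_nonneg_left
        (sum_midpoint_moments_le hK hη (by positivity) (by positivity)) (by positivity))

end StrongAssumption

/-! ### Mean-square contraction of the PRLMC step -/

namespace StrongAssumption

variable {d K : ℕ} {U : Euc d → ℝ} {m L η : ℝ}

lemma norm_prlmcMid_sub_sub_le (h : StrongAssumption U m L) (hη : 0 ≤ η) (x y : Euc d)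
    (g : Fin K → Euc d) (i : Fin K) :
    ‖prlmcMid U η K x g i - prlmcMid U η K y g i - (x - y)‖ ≤ η * L * ‖x - y‖ := by
  have hweight : i * η / K ≤ η := by
    rw [mul_div_right_comm]
    exact mul_le_of_le_one_left hη (div_le_one_of_le₀ (by exact_mod_cast i.2.le) (by positivity))
  have hdrift : prlmcMid U η K x g i - prlmcMid U η K y g i - (x - y)
      = -((i * η / K) • (gradient U x - gradient U y)) := by
    simp only [prlmcMid]
    module
  rw [hdrift, norm_neg, norm_smul, Real.norm_of_nonneg (by positivity), mul_assoc]
  exact mul_le_mul hweight (h.norm_gradient_sub_le x y) (norm_nonneg _) hη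

lemma norm_gradient_prlmcMid_sub_le (h : StrongAssumption U m L) (hη : 0 ≤ η) (hηL : η * L ≤ 1)
    (x y : Euc d) (g : Fin K → Euc d) (i : Fin K) :
    ‖gradient U (prlmcMid U η K x g i) - gradient U (prlmcMid U η K y g i)‖
      ≤ 2 * L * ‖x - y‖ := by
  have hL := h.const_pos
  have hmid : ‖prlmcMid U η K x g i - prlmcMid U η K y g i‖ ≤ 2 * ‖x - y‖ := by
    linarith [h.norm_prlmcMid_sub_sub_le hη x y g i,
      mul_le_of_le_one_left (norm_nonneg (x - y)) hηL,
      norm_sub_norm_le (prlmcMid U η K x g i - prlmcMid U η K y g i) (x - y)]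
  calc _ ≤ L * ‖prlmcMid U η K x g i - prlmcMid U η K y g i‖ := h.norm_gradient_sub_le _ _
    _ ≤ L * (2 * ‖x - y‖) := by gcongr
    _ = 2 * L * ‖x - y‖ := by ring

lemma mul_norm_sub_sq_le_inner_gradient_prlmcMid_sub (h : StrongAssumption U m L) (hη : 0 ≤ η)
    (hηL : η * L ≤ 1) (x y : Euc d) (g : Fin K → Euc d) (i : Fin K) :
    (m - 4 * η * L ^ 2) * ‖x - y‖ ^ 2
      ≤ ⟪gradient U (prlmcMid U η K x g i) - gradient U (prlmcMid U η K y g i), x - y⟫ := by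
  have hm : 0 < m := h.2.1
  have hmL : m ≤ L := h.2.2.1
  have hL := h.const_pos
  set V := prlmcMid U η K x g i - prlmcMid U η K y g i
  set D := gradient U (prlmcMid U η K x g i) - gradient U (prlmcMid U η K y g i)
  have hdist : ‖V - (x - y)‖ ≤ η * L * ‖x - y‖ := h.norm_prlmcMid_sub_sub_le hη x y g i
  have hcross : ⟪D, V - (x - y)⟫ ≤ 2 * η * L ^ 2 * ‖x - y‖ ^ 2 := by
    calc ⟪D, V - (x - y)⟫ ≤ ‖D‖ * ‖V - (x - y)‖ := real_inner_le_norm _ _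
      _ ≤ (2 * L * ‖x - y‖) * (η * L * ‖x - y‖) := by
        gcongr
        exact h.norm_gradient_prlmcMid_sub_le hη hηL x y g i
      _ = _ := by ring
  have hnorm : (1 - 2 * (η * L)) * ‖x - y‖ ^ 2 ≤ ‖V‖ ^ 2 := by
    have hV : (1 - η * L) * ‖x - y‖ ≤ ‖V‖ := by
      linarith [norm_sub_norm_le (x - y) V, norm_sub_rev V (x - y)]
    calc _ ≤ ((1 - η * L) * ‖x - y‖) ^ 2 := by nlinarith [sq_nonneg (η * L * ‖x - y‖)]
      _ ≤ ‖V‖ ^ 2 := pow_le_pow_left₀ (mul_nonneg (by linarith) (norm_nonneg _)) hV 2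
  calc (m - 4 * η * L ^ 2) * ‖x - y‖ ^ 2
      ≤ m * ((1 - 2 * (η * L)) * ‖x - y‖ ^ 2) - 2 * η * L ^ 2 * ‖x - y‖ ^ 2 := by
        have hηm : m * (η * L) * ‖x - y‖ ^ 2 ≤ L * (η * L) * ‖x - y‖ ^ 2 := by gcongr
        linarith
    _ ≤ m * ‖V‖ ^ 2 - ⟪D, V - (x - y)⟫ := by gcongr
    _ ≤ ⟪D, V⟫ - ⟪D, V - (x - y)⟫ := by
      gcongr
      exact h.mul_norm_sub_sq_le_inner _ _
    _ = ⟪D, x - y⟫ := by rw [← inner_sub_right, sub_sub_cancel]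

lemma norm_sub_smul_average_gradient_prlmcMid_sub_sq_le (h : StrongAssumption U m L) (hK : 1 ≤ K)
    (hη : 0 ≤ η) (hηL : η * L ≤ 1) (x y : Euc d) (g : Fin K → Euc d) :
    ‖x - y - η • (K : ℝ)⁻¹ •
        ∑ i, (gradient U (prlmcMid U η K x g i) - gradient U (prlmcMid U η K y g i))‖ ^ 2
      ≤ (1 - 2 * η * m + 12 * η ^ 2 * L ^ 2) * ‖x - y‖ ^ 2 := by
  have hK₀ : (0 : ℝ) < K := by exact_mod_cast hK
  set D := fun i => gradient U (prlmcMid U η K x g i) - gradient U (prlmcMid U η K y g i)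
  have hmono : (m - 4 * η * L ^ 2) * ‖x - y‖ ^ 2 ≤ ⟪(K : ℝ)⁻¹ • ∑ i, D i, x - y⟫ := by
    have hsum := Finset.card_nsmul_le_sum Finset.univ (fun i => ⟪D i, x - y⟫) _ fun i _ =>
      h.mul_norm_sub_sq_le_inner_gradient_prlmcMid_sub hη hηL x y g i
    rw [Finset.card_univ, Fintype.card_fin, nsmul_eq_mul] at hsum
    rw [real_inner_smul_left, sum_inner]
    exact (le_inv_mul_iff₀ hK₀).2 hsum
  have hlip : ‖(K : ℝ)⁻¹ • ∑ i, D i‖ ≤ 2 * L * ‖x - y‖ := by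
    have hsum := Finset.sum_le_card_nsmul Finset.univ (fun i => ‖D i‖) _ fun i _ =>
      h.norm_gradient_prlmcMid_sub_le hη hηL x y g i
    rw [Finset.card_univ, Fintype.card_fin, nsmul_eq_mul] at hsum
    rw [norm_smul, Real.norm_of_nonneg (by positivity)]
    exact (inv_mul_le_iff₀ hK₀).2 ((norm_sum_le _ _).trans hsum)
  calc _ ≤ (1 - 2 * η * (m - 4 * η * L ^ 2) + η ^ 2 * (2 * L) ^ 2) * ‖x - y‖ ^ 2 :=
        norm_sub_smul_sq_le hη hmono hlip
    _ = _ := by ring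

lemma lintegral_enorm_prlmcMap_sub_sq_bernoulliSelection_le (h : StrongAssumption U m L)
    (hK : 1 ≤ K) (hη : 0 ≤ η) (hηL : η * L ≤ 1) (x y z : Euc d) (g : Fin K → Euc d) :
    ∫⁻ s, ‖prlmcMap U η K (x, z, s, g) - prlmcMap U η K (y, z, s, g)‖ₑ ^ 2 ∂bernoulliSelection K
      ≤ ENNReal.ofReal ((1 - 2 * η * m + 21 * η ^ 2 * L ^ 2) * ‖x - y‖ ^ 2) := by
  have hK₀ : (0 : ℝ) < K := by exact_mod_cast hK
  set D := fun i => gradient U (prlmcMid U η K x g i) - gradient U (prlmcMid U η K y g i) with hD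
  obtain ⟨G, hG⟩ : ∃ G, G = gradient U x - gradient U y := ⟨_, rfl⟩
  have hdiff : ∀ s, prlmcMap U η K (x, z, s, g) - prlmcMap U η K (y, z, s, g)
      = (x - y - η • G) + ∑ i, s i • η • (G - D i) := fun s => by
    simp only [prlmcMap, midpointCorrection, eulerStep, hG, hD, smul_comm _ η, smul_sub,
      Finset.sum_sub_distrib, Finset.smul_sum]
    abel
  have hbias : x - y - η • G + (K : ℝ)⁻¹ • ∑ i, η • (G - D i)
      = x - y - η • (K : ℝ)⁻¹ • ∑ i, D i := by
    rw [← Finset.smul_sum, Finset.sum_sub_distrib, Finset.sum_const, Finset.card_univ,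
      Fintype.card_fin, smul_comm, smul_sub, ← Nat.cast_smul_eq_nsmul ℝ, inv_smul_smul₀ hK₀.ne',
      smul_sub]
    abel
  have hterm : ∀ i, ‖η • (G - D i)‖ ^ 2 ≤ 9 * η ^ 2 * L ^ 2 * ‖x - y‖ ^ 2 := fun i => by
    have hGD : ‖G - D i‖ ≤ 3 * L * ‖x - y‖ := by
      linarith [norm_sub_le G (D i), h.norm_gradient_prlmcMid_sub_le hη hηL x y g i,
        hG ▸ h.norm_gradient_sub_le x y]
    rw [norm_smul, Real.norm_of_nonneg hη]
    calc (η * ‖G - D i‖) ^ 2 ≤ (η * (3 * L * ‖x - y‖)) ^ 2 := by gcongr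
      _ = _ := by ring
  have hvar : (K : ℝ)⁻¹ * (1 - (K : ℝ)⁻¹) * ∑ i, ‖η • (G - D i)‖ ^ 2
      ≤ 9 * η ^ 2 * L ^ 2 * ‖x - y‖ ^ 2 := by
    have hsum := Finset.sum_le_card_nsmul Finset.univ _ _ fun i _ => hterm i
    rw [Finset.card_univ, Fintype.card_fin, nsmul_eq_mul, ← inv_mul_le_iff₀ hK₀] at hsum
    refine le_trans (mul_le_mul_of_nonneg_right ?_ (by positivity)) hsum
    exact mul_le_of_le_one_right (by positivity) (sub_le_self _ (by positivity))
  simp_rw [hdiff, lintegral_enorm_add_sum_smul_sq_bernoulliSelection hK, hbias]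
  exact ENNReal.ofReal_le_ofReal (by
    linarith [h.norm_sub_smul_average_gradient_prlmcMid_sub_sq_le hK hη hηL x y g])

lemma eLpNorm_prlmcMap_sub_le (h : StrongAssumption U m L) (hK : 1 ≤ K) (hη : 0 ≤ η)
    (hηL : 21 * η * L ^ 2 ≤ m) (x y : Euc d) :
    eLpNorm (fun r => prlmcMap U η K (x, r) - prlmcMap U η K (y, r)) 2
        ((isotropicGaussian (Euc d) (2 * η)).prod (midpointNoise d K))
      ≤ ENNReal.ofReal (√(1 - η * m) * ‖x - y‖) := by
  have := isProbabilityMeasure_bernoulliSelection hK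
  have := isProbabilityMeasure_midpointNoise (d := d) hK
  have hmap := h.measurable_prlmcMap η K
  have hL := h.const_pos
  have hmL : m ≤ L := h.2.2.1
  have hηL₁ : η * L ≤ 1 := le_of_mul_le_mul_right (by linarith [mul_nonneg hη (sq_nonneg L)]) hL
  have hηm : η * m ≤ 1 := (mul_le_mul_of_nonneg_left hmL hη).trans hηL₁
  rw [eLpNorm_two_le_ofReal_iff (by positivity), lintegral_prod _ (by fun_prop), mul_pow,
    Real.sq_sqrt (by linarith)]
  simp_rw [midpointNoise]
  have hrate : (1 - 2 * η * m + 21 * η ^ 2 * L ^ 2) * ‖x - y‖ ^ 2 ≤ (1 - η * m) * ‖x - y‖ ^ 2 := by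
    gcongr
    linarith [mul_le_mul_of_nonneg_left hηL hη]
  calc _ ≤ ∫⁻ _, ∫⁻ _, ENNReal.ofReal ((1 - η * m) * ‖x - y‖ ^ 2)
          ∂(Measure.pi fun _ : Fin K => stdGaussian d) ∂isotropicGaussian (Euc d) (2 * η) := by
        refine lintegral_mono fun z => ?_
        rw [lintegral_prod_symm _ (by fun_prop)]
        exact lintegral_mono fun g =>
          (h.lintegral_enorm_prlmcMap_sub_sq_bernoulliSelection_le hK hη hηL₁ x y z g).trans
            (ENNReal.ofReal_le_ofReal hrate)
    _ = _ := by simp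

lemma memLp_prlmcMap (h : StrongAssumption U m L) (hK : 1 ≤ K) (hη : 0 ≤ η) (x : Euc d) :
    MemLp (fun r => prlmcMap U η K (x, r)) 2
      ((isotropicGaussian (Euc d) (2 * η)).prod (midpointNoise d K)) := by
  have := isProbabilityMeasure_midpointNoise (d := d) hK
  have hcorr := h.measurable_midpointCorrection η K
  have hgauss : MemLp (fun z : Euc d => z) 2 (isotropicGaussian (Euc d) (2 * η)) :=
    ⟨by fun_prop, (eLpNorm_two_isotropicGaussian_le (by positivity)).trans_lt ENNReal.ofReal_lt_top⟩
  have hmid : MemLp (fun r => midpointCorrection U η K x r.1 r.2) 2 (midpointNoise d K) := by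
    have hsq := (eLpNorm_two_sq _ _).trans_lt
      ((h.lintegral_enorm_midpointCorrection_sq_le hK hη x).trans_lt ENNReal.ofReal_lt_top)
    exact ⟨Measurable.aestronglyMeasurable (by fun_prop), by simpa using hsq⟩
  exact ((memLp_const (x - η • gradient U x)).add (hgauss.comp_fst _)).add (hmid.comp_snd _)

end StrongAssumption

/-! ### Invariant laws of contractive random maps -/

section ContractiveRandomMap

lemma eLpNorm_prod_le_mul {α β E G : Type*} [MeasurableSpace α] [MeasurableSpace β]
    [NormedAddCommGroup E] [NormedAddCommGroup G] {μ : Measure α} {ν : Measure β} [SFinite ν]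
    {p c : ℝ≥0∞} (hp₀ : p ≠ 0) (hp : p ≠ ∞) {f : α × β → E} {g : α → G}
    (hf : AEStronglyMeasurable f (μ.prod ν)) (hc : c ≠ ∞)
    (h : ∀ x, eLpNorm (fun y => f (x, y)) p ν ≤ c * ‖g x‖ₑ) :
    eLpNorm f p (μ.prod ν) ≤ c * eLpNorm g p μ := by
  lift p to ℝ≥0 using hp
  have hp' : p ≠ 0 := by simpa using hp₀
  have hpos : (0 : ℝ) < p := by exact_mod_cast pos_iff_ne_zero.2 hp'
  rw [← ENNReal.rpow_le_rpow_iff hpos, ENNReal.mul_rpow_of_nonneg _ _ hpos.le,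
    eLpNorm_nnreal_pow_eq_lintegral hp', eLpNorm_nnreal_pow_eq_lintegral hp',
    lintegral_prod _ (hf.enorm.pow_const _),
    ← lintegral_const_mul' _ _ (ENNReal.rpow_ne_top_of_nonneg hpos.le hc)]
  refine lintegral_mono fun x => ?_
  calc ∫⁻ y, ‖f (x, y)‖ₑ ^ (p : ℝ) ∂ν = eLpNorm (fun y => f (x, y)) p ν ^ (p : ℝ) :=
        (eLpNorm_nnreal_pow_eq_lintegral hp').symm
    _ ≤ (c * ‖g x‖ₑ) ^ (p : ℝ) := ENNReal.rpow_le_rpow (h x) hpos.le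
    _ = c ^ (p : ℝ) * ‖g x‖ₑ ^ (p : ℝ) := ENNReal.mul_rpow_of_nonneg _ _ hpos.le

lemma bind_map_eq_map_prod {α β γ : Type*} [MeasurableSpace α] [MeasurableSpace β]
    [MeasurableSpace γ] {F : α × β → γ} (hF : Measurable F) (μ : Measure α) (ν : Measure β)
    [SFinite ν] : μ.bind (fun x => ν.map fun y => F (x, y)) = (μ.prod ν).map F := by
  have hκ (x : α) {s : Set γ} (hs : MeasurableSet s) :
      ν.map (fun y => F (x, y)) s = ν (Prod.mk x ⁻¹' (F ⁻¹' s)) :=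
    Measure.map_apply (by fun_prop) hs
  have hmeas : Measurable fun x => ν.map fun y => F (x, y) :=
    Measure.measurable_of_measurable_coe _ fun s hs => by
      simpa only [hκ _ hs] using measurable_measure_prodMk_left (hF hs)
  ext s hs
  rw [Measure.bind_apply hs hmeas.aemeasurable, Measure.map_apply hF hs,
    Measure.prod_apply (hF hs)]
  simp_rw [hκ _ hs]

lemma measurePreserving_tail_head {Ω : Type*} [MeasurableSpace Ω] (P : Measure Ω)
    [IsProbabilityMeasure P] :
    MeasurePreserving (fun ω : ℕ → Ω => (fun n => ω (n + 1), ω 0))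
      (Measure.infinitePi fun _ => P) ((Measure.infinitePi fun _ => P).prod P) := by
  have hcoord : iIndepFun (fun (n : ℕ) (ω : ℕ → Ω) => ω n) (Measure.infinitePi fun _ => P) :=
    iIndepFun_infinitePi (X := fun _ ω => ω) fun _ => measurable_id
  have hsplit := indep_iSup_of_disjoint (fun n => (measurable_pi_apply n).comap_le) hcoord
    (S := Set.range Nat.succ) (T := {0}) (by simp)
  have hindep : IndepFun (fun (ω : ℕ → Ω) n => ω (n + 1)) (fun ω => ω 0)
      (Measure.infinitePi fun _ => P) := by
    refine indep_of_indep_of_le_left (indep_of_indep_of_le_right hsplit (by simp)) ?_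
    rw [MeasurableSpace.pi, MeasurableSpace.comap_iSup]
    simp_rw [MeasurableSpace.comap_comp]
    exact iSup_le fun n => le_iSup₂_of_le (n + 1) ⟨n, rfl⟩ le_rfl
  refine ⟨by fun_prop, ?_⟩
  rw [hindep.map_prod_eq_prod_map_map (Measurable.aemeasurable (by fun_prop))
      (Measurable.aemeasurable (by fun_prop)),
    Measure.map_infinitePi_infinitePi_of_inj (P := fun _ => P) Nat.succ_injective,
    (measurePreserving_eval_infinitePi (fun _ => P) 0).map_eq]

variable {E Ω S : Type*} [NormedAddCommGroup E] [MeasurableSpace E] [MeasurableSpace Ω]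
  [MeasurableSpace S]

/-- A random self-map `x ↦ F (x, ω)` of `E`, with `ω` of law `P`, that is a contraction in mean of
order `p`. Centring the moment condition at `0` loses nothing, by the contraction property. -/
structure IsContractiveRandomMap (F : E × Ω → E) (P : Measure Ω) (p : ℝ≥0∞) (ρ : ℝ≥0) : Prop where
  measurable : Measurable F
  memLp_zero : MemLp (fun ω => F (0, ω)) p P
  eLpNorm_sub_le : ∀ x y, eLpNorm (fun ω => F (x, ω) - F (y, ω)) p P ≤ ρ * ‖x - y‖ₑ
  lt_one : ρ < 1

namespace IsContractiveRandomMap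

variable [BorelSpace E] [SecondCountableTopology E] {F : E × Ω → E} {P : Measure Ω}
  {p : ℝ≥0∞} {ρ : ℝ≥0} {Q : Measure S} {X Y : S → E}

lemma aestronglyMeasurable_comp (h : IsContractiveRandomMap F P p ρ)
    (hX : AEStronglyMeasurable X Q) :
    AEStronglyMeasurable (fun q => F (X q.1, q.2)) (Q.prod P) :=
  (h.measurable.comp_aemeasurable
    (hX.aemeasurable.comp_fst.prodMk measurable_snd.aemeasurable)).aestronglyMeasurable

lemma eLpNorm_comp_sub_le [SFinite P] (h : IsContractiveRandomMap F P p ρ) (hp₀ : p ≠ 0)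
    (hp : p ≠ ∞) (hX : AEStronglyMeasurable X Q) (hY : AEStronglyMeasurable Y Q) :
    eLpNorm (fun q => F (X q.1, q.2) - F (Y q.1, q.2)) p (Q.prod P)
      ≤ ρ * eLpNorm (fun s => X s - Y s) p Q := by
  have hmeas : AEStronglyMeasurable (fun q => F (X q.1, q.2) - F (Y q.1, q.2)) (Q.prod P) :=
    (h.aestronglyMeasurable_comp hX).sub (h.aestronglyMeasurable_comp hY)
  exact eLpNorm_prod_le_mul hp₀ hp hmeas ENNReal.coe_ne_top fun s => h.eLpNorm_sub_le (X s) (Y s)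

lemma memLp_comp [IsProbabilityMeasure P] [IsFiniteMeasure Q]
    (h : IsContractiveRandomMap F P p ρ) (hp₀ : p ≠ 0) (hp : p ≠ ∞) (hX : MemLp X p Q) :
    MemLp (fun q => F (X q.1, q.2)) p (Q.prod P) := by
  have hdiff : MemLp (fun q => F (X q.1, q.2) - F (0, q.2)) p (Q.prod P) := by
    refine ⟨(h.aestronglyMeasurable_comp hX.1).sub
      (h.aestronglyMeasurable_comp aestronglyMeasurable_const), ?_⟩
    refine (h.eLpNorm_comp_sub_le hp₀ hp hX.1 aestronglyMeasurable_zero).trans_lt ?_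
    exact ENNReal.mul_lt_top ENNReal.coe_lt_top (by simpa using hX.2)
  simpa only [Pi.add_def, sub_add_cancel] using hdiff.add (h.memLp_zero.comp_snd Q)

-- The contraction on `L^p` over sequences of noises is `(T X)(ω) = F (X (shift ω), ω 0)`: its
-- fixed point is the limit of the backward iterations `F(F(⋯, ω 1), ω 0)`.
theorem exists_invariant [IsProbabilityMeasure P] [CompleteSpace E] [Fact (1 ≤ p)]
    (h : IsContractiveRandomMap F P p ρ) (hp : p ≠ ∞) :
    ∃ μ : Measure E, IsProbabilityMeasure μ ∧ MemLp (fun x => x) p μ ∧ (μ.prod P).map F = μ := by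
  have hp₀ : p ≠ 0 := (zero_lt_one.trans_le Fact.out).ne'
  let Q : Measure (ℕ → Ω) := Measure.infinitePi fun _ => P
  have hτ := measurePreserving_tail_head P
  have hmem (X : Lp E p Q) := (h.memLp_comp hp₀ hp (Lp.memLp X)).comp_measurePreserving hτ
  let T : Lp E p Q → Lp E p Q := fun X => (hmem X).toLp _
  have hT : ContractingWith ρ T := by
    refine ⟨h.lt_one, fun X Y => ?_⟩
    rw [Lp.edist_toLp_toLp, Lp.edist_def]
    exact (eLpNorm_comp_measurePreserving ((h.aestronglyMeasurable_comp (Lp.memLp X).1).sub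
      (h.aestronglyMeasurable_comp (Lp.memLp Y).1)) hτ).trans_le
        (h.eLpNorm_comp_sub_le hp₀ hp (Lp.memLp X).1 (Lp.memLp Y).1)
  let X := hT.fixedPoint
  have hX : Measurable X := (Lp.stronglyMeasurable X).measurable
  have hfix : X =ᵐ[Q] fun ω => F (X fun n => ω (n + 1), ω 0) := by
    have hcoe := (hmem X).coeFn_toLp
    rwa [show (hmem X).toLp _ = X from hT.fixedPoint_isFixedPt] at hcoe
  refine ⟨Q.map X, Measure.isProbabilityMeasure_map hX.aemeasurable,
    (memLp_map_measure_iff (by fun_prop) hX.aemeasurable).2 (Lp.memLp X), ?_⟩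
  have hprod : (Q.map X).prod P = (Q.prod P).map (Prod.map X id) := by
    rw [← Measure.map_prod_map Q P hX measurable_id, Measure.map_id]
  rw [hprod, ← hτ.map_eq,
    Measure.map_map (by fun_prop) hτ.measurable, Measure.map_map h.measurable (by fun_prop)]
  exact (Measure.map_congr hfix).symm

lemma lintegral_enorm_sub_le [IsProbabilityMeasure P] (h : IsContractiveRandomMap F P p ρ)
    (hp : 1 ≤ p) (x y : E) : ∫⁻ ω, ‖F (x, ω) - F (y, ω)‖ₑ ∂P ≤ ρ * ‖x - y‖ₑ := by
  have := h.measurable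
  rw [← eLpNorm_one_eq_lintegral_enorm]
  exact (eLpNorm_le_eLpNorm_of_exponent_le hp
    (Measurable.aestronglyMeasurable (by fun_prop))).trans (h.eLpNorm_sub_le x y)

variable [IsProbabilityMeasure P] {f : E → ℝ} {k : ℝ≥0} {C : ℝ}

lemma lipschitzWith_integral_comp (h : IsContractiveRandomMap F P p ρ) (hp : 1 ≤ p)
    (hf : LipschitzWith k f) (hC : ∀ x, ‖f x‖ ≤ C) :
    LipschitzWith (k * ρ) fun x => ∫ ω, f (F (x, ω)) ∂P := by
  have hfF : Measurable fun q => f (F q) := hf.continuous.measurable.comp h.measurable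
  have hint (x : E) : Integrable (fun ω => f (F (x, ω))) P :=
    .of_bound (hfF.comp measurable_prodMk_left).aestronglyMeasurable C (.of_forall fun _ => hC _)
  intro x y
  rw [edist_eq_enorm_sub, edist_eq_enorm_sub, ← integral_sub (hint x) (hint y), ENNReal.coe_mul,
    mul_assoc]
  calc ‖∫ ω, f (F (x, ω)) - f (F (y, ω)) ∂P‖ₑ
      ≤ ∫⁻ ω, ‖f (F (x, ω)) - f (F (y, ω))‖ₑ ∂P := enorm_integral_le_lintegral_enorm _
    _ ≤ ∫⁻ ω, k * ‖F (x, ω) - F (y, ω)‖ₑ ∂P := lintegral_mono fun ω => by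
        simpa only [edist_eq_enorm_sub] using hf (F (x, ω)) (F (y, ω))
    _ ≤ k * (ρ * ‖x - y‖ₑ) := by
        rw [lintegral_const_mul' _ _ ENNReal.coe_ne_top]
        gcongr
        exact h.lintegral_enorm_sub_le hp x y

lemma exists_lipschitzWith_integral_eq (h : IsContractiveRandomMap F P p ρ) (hp : 1 ≤ p)
    (hf : LipschitzWith k f) (hC : ∀ x, ‖f x‖ ≤ C) (n : ℕ) :
    ∃ g : E → ℝ, LipschitzWith (k * ρ ^ n) g ∧ (∀ x, ‖g x‖ ≤ C) ∧
      ∀ μ : Measure E, IsProbabilityMeasure μ → (μ.prod P).map F = μ →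
        ∫ x, g x ∂μ = ∫ x, f x ∂μ := by
  induction n with
  | zero => exact ⟨f, by simpa using hf, hC, fun _ _ _ => rfl⟩
  | succ n ih =>
    obtain ⟨g, hg, hgC, hgf⟩ := ih
    have hgF : Measurable fun q => g (F q) := hg.continuous.measurable.comp h.measurable
    refine ⟨fun x => ∫ ω, g (F (x, ω)) ∂P, ?_, fun x => ?_, fun μ hμ hinv => ?_⟩
    · simpa only [pow_succ, mul_assoc] using h.lipschitzWith_integral_comp hp hg hgC
    · simpa using norm_integral_le_of_norm_le_const (μ := P) (.of_forall fun ω => hgC (F (x, ω)))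
    · rw [← hgf μ hμ hinv, ← integral_prod (μ := μ) (ν := P) (fun q => g (F q))
        (.of_bound hgF.aestronglyMeasurable C (.of_forall fun _ => hgC _))]
      conv_rhs => rw [← hinv]
      exact (integral_map h.measurable.aemeasurable hg.continuous.aestronglyMeasurable).symm

lemma integral_eq_of_invariant (h : IsContractiveRandomMap F P p ρ) (hp : 1 ≤ p)
    {μ ν : Measure E} [IsProbabilityMeasure μ] [IsProbabilityMeasure ν]
    (hμ : (μ.prod P).map F = μ) (hν : (ν.prod P).map F = ν) (hf : LipschitzWith k f)
    (hC : ∀ x, ‖f x‖ ≤ C) : ∫ x, f x ∂μ = ∫ x, f x ∂ν := by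
  choose g hg hgC hgf using h.exists_lipschitzWith_integral_eq hp hf hC
  have hgcont (n : ℕ) : Continuous (g n) := (hg n).continuous
  have hdiff (n : ℕ) :
      ∫ q, (g n q.1 - g n q.2) ∂μ.prod ν = ∫ x, f x ∂μ - ∫ x, f x ∂ν := by
    have hint (κ : Measure E) [IsProbabilityMeasure κ] : Integrable (g n) κ :=
      .of_bound (hgcont n).aestronglyMeasurable C (.of_forall (hgC n))
    rw [integral_sub ((hint μ).comp_fst ν) ((hint ν).comp_snd μ), integral_fun_fst,
      integral_fun_snd, ← hgf n μ inferInstance hμ, ← hgf n ν inferInstance hν]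
    simp
  have hpointwise (q : E × E) : Tendsto (fun n => g n q.1 - g n q.2) atTop (𝓝 0) := by
    refine squeeze_zero_norm (fun n => (hg n).norm_sub_le q.1 q.2) ?_
    have hρ := tendsto_pow_atTop_nhds_zero_of_lt_one ρ.2 (NNReal.coe_lt_one.2 h.lt_one)
    simpa using (hρ.const_mul (k : ℝ)).mul_const ‖q.1 - q.2‖
  have hlim : Tendsto (fun n => ∫ q, (g n q.1 - g n q.2) ∂μ.prod ν) atTop
      (𝓝 (∫ _ : E × E, (0 : ℝ) ∂μ.prod ν)) :=
    tendsto_integral_of_dominated_convergence (fun _ => C + C)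
      (fun n => ((hgcont n).comp continuous_fst).sub ((hgcont n).comp continuous_snd)
        |>.aestronglyMeasurable)
      (integrable_const _)
      (fun n => .of_forall fun q => (norm_sub_le _ _).trans (add_le_add (hgC n _) (hgC n _)))
      (.of_forall hpointwise)
  simp only [hdiff, integral_zero] at hlim
  exact sub_eq_zero.1 (tendsto_nhds_unique tendsto_const_nhds hlim)

theorem eq_of_invariant (h : IsContractiveRandomMap F P p ρ) (hp : 1 ≤ p)
    {μ ν : Measure E} [hPμ : IsProbabilityMeasure μ] [hPν : IsProbabilityMeasure ν]
    (hμ : (μ.prod P).map F = μ) (hν : (ν.prod P).map F = ν) : μ = ν := by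
  let μ' : ProbabilityMeasure E := ⟨μ, hPμ⟩
  let ν' : ProbabilityMeasure E := ⟨ν, hPν⟩
  have hlim : Tendsto (fun _ : ℕ => μ') atTop (𝓝 ν') := by
    refine tendsto_iff_forall_lipschitz_integral_tendsto.2 ?_
    rintro f ⟨C, hC⟩ ⟨k, hk⟩
    have hbound (x : E) : ‖f x‖ ≤ C + ‖f 0‖ := by
      linarith [norm_sub_norm_le (f x) (f 0), dist_eq_norm (f x) (f 0), hC x 0]
    have hfμν : ∫ x, f x ∂(μ' : Measure E) = ∫ x, f x ∂(ν' : Measure E) :=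
      h.integral_eq_of_invariant hp hμ hν hk hbound
    simpa only [hfμν] using tendsto_const_nhds
  exact congrArg (fun κ : ProbabilityMeasure E => (κ : Measure E))
    (tendsto_nhds_unique tendsto_const_nhds hlim)

end IsContractiveRandomMap

end ContractiveRandomMap

/-! ### The Wasserstein distance and the synchronous coupling -/

section Wasserstein

variable {d : ℕ} {μ ν : Measure (Euc d)}

lemma W2_eq_iInf_eLpNorm :
    W2 μ ν = ⨅ (Γ : Measure (Euc d × Euc d)) (_ : Γ.map Prod.fst = μ ∧ Γ.map Prod.snd = ν),
      eLpNorm (fun p => p.1 - p.2) 2 Γ := by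
  have hcost (Γ : Measure (Euc d × Euc d)) :
      (∫⁻ p, (‖p.1 - p.2‖₊ : ℝ≥0∞) ^ 2 ∂Γ) ^ (1 / 2 : ℝ) = eLpNorm (fun p => p.1 - p.2) 2 Γ := by
    simpa [enorm] using (eLpNorm_eq_lintegral_rpow_enorm_toReal (μ := Γ) two_ne_zero
      ENNReal.ofNat_ne_top (f := fun p => p.1 - p.2)).symm
  simp only [W2, hcost]

lemma W2_map_le {S : Type*} [MeasurableSpace S] {κ : Measure S} {f g : S → Euc d}
    (hf : MeasurePreserving f κ μ) (hg : MeasurePreserving g κ ν) :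
    W2 μ ν ≤ eLpNorm (fun s => f s - g s) 2 κ := by
  have hfg := hf.measurable.prodMk hg.measurable
  have hcost := eLpNorm_map_measure (p := 2) (f := fun s => (f s, g s)) (μ := κ)
    (g := fun p : Euc d × Euc d => p.1 - p.2) (by fun_prop) hfg.aemeasurable
  rw [W2_eq_iInf_eLpNorm]
  refine (iInf₂_le (κ.map fun s => (f s, g s)) ⟨?_, ?_⟩).trans_eq hcost
  · rw [Measure.map_map measurable_fst hfg]
    exact hf.map_eq
  · rw [Measure.map_map measurable_snd hfg]
    exact hg.map_eq

lemma W2_ne_top [IsProbabilityMeasure μ] [IsProbabilityMeasure ν] (hμ : MemLp (fun x => x) 2 μ)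
    (hν : MemLp (fun x => x) 2 ν) : W2 μ ν ≠ ∞ :=
  ((W2_map_le measurePreserving_fst measurePreserving_snd).trans_lt
    ((hμ.comp_fst ν).sub (hν.comp_snd μ)).2).ne

lemma le_mul_W2_add_of_forall_coupling {a b c : ℝ≥0∞} (ha₀ : a ≠ 0) (ha : a ≠ ∞)
    (h : ∀ Γ : Measure (Euc d × Euc d), Γ.map Prod.fst = μ → Γ.map Prod.snd = ν →
      c ≤ a * eLpNorm (fun p => p.1 - p.2) 2 Γ + b) :
    c ≤ a * W2 μ ν + b := by
  simp only [W2_eq_iInf_eLpNorm, ENNReal.mul_iInf_of_ne ha₀ ha, ENNReal.iInf_add]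
  exact le_iInf₂ fun Γ hΓ => h Γ hΓ.1 hΓ.2

end Wasserstein

namespace StrongAssumption

variable {d K : ℕ} {U : Euc d → ℝ} {m L η : ℝ}

lemma eLpNorm_midpointCorrection_le (h : StrongAssumption U m L) (hK : 1 ≤ K) (hη : 0 ≤ η)
    {μ : Measure (Euc d)} [IsProbabilityMeasure μ] (hμ : MemLp (fun x => x) 2 μ) :
    eLpNorm (fun p => midpointCorrection U η K p.1 p.2.1 p.2.2) 2 (μ.prod (midpointNoise d K))
      ≤ ENNReal.ofReal (η * L * √η * √(2 - 2 / K)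
        * √(η * L ^ 2 * (∫⁻ x, ‖x‖ₑ ^ 2 ∂μ).toReal / 3 + d)) := by
  have := isProbabilityMeasure_midpointNoise (d := d) hK
  have hcorr := h.measurable_midpointCorrection η K
  have hL := h.const_pos
  have hK₁ : (0 : ℝ) ≤ 2 - 2 / K :=
    sub_nonneg.2 (div_le_self zero_le_two (by exact_mod_cast hK))
  have hmoment : ∫⁻ x, ‖x‖ₑ ^ 2 ∂μ ≠ ∞ := by
    simpa only [← eLpNorm_two_sq] using ENNReal.pow_ne_top hμ.2.ne
  set s := (∫⁻ x, ‖x‖ₑ ^ 2 ∂μ).toReal with hs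
  have : 0 ≤ s := ENNReal.toReal_nonneg
  set A := (η * L) ^ 2 * (η * (2 - 2 / K)) with hA
  have : 0 ≤ A := by positivity
  rw [eLpNorm_two_le_ofReal_iff (by positivity), lintegral_prod _ (by fun_prop)]
  calc ∫⁻ x, ∫⁻ r, ‖midpointCorrection U η K x r.1 r.2‖ₑ ^ 2 ∂midpointNoise d K ∂μ
      ≤ ∫⁻ x, (ENNReal.ofReal (A * (η * L ^ 2 / 3)) * ‖x‖ₑ ^ 2 + ENNReal.ofReal (A * d)) ∂μ := by
        refine lintegral_mono fun x => (h.lintegral_enorm_midpointCorrection_sq_le hK hη x).trans ?_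
        rw [enorm_sq_eq_ofReal_norm_sq, ← ENNReal.ofReal_mul (by positivity),
          ← ENNReal.ofReal_add (by positivity) (by positivity)]
        exact ENNReal.ofReal_le_ofReal (by rw [hA]; linarith)
    _ = ENNReal.ofReal (A * (η * L ^ 2 / 3) * s + A * d) := by
        rw [lintegral_add_right _ measurable_const, lintegral_const_mul _ (by fun_prop),
          lintegral_const, measure_univ, mul_one, ← ENNReal.ofReal_toReal hmoment, ← hs,
          ← ENNReal.ofReal_mul (by positivity),
          ← ENNReal.ofReal_add (by positivity) (by positivity)]
    _ = ENNReal.ofReal ((η * L * √η * √(2 - 2 / K) * √(η * L ^ 2 * s / 3 + d)) ^ 2) := by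
        simp only [mul_pow, Real.sq_sqrt hη, Real.sq_sqrt hK₁,
          Real.sq_sqrt (show 0 ≤ η * L ^ 2 * s / 3 + d by positivity), hA]
        ring_nf

lemma eLpNorm_prlmcMap_sub_le_add (h : StrongAssumption U m L) (hη : 0 ≤ η) {S : Type*}
    [MeasurableSpace S] {κ : Measure S} {X X' Y w : S → Euc d}
    {ζ : S → (Fin K → ℝ) × (Fin K → Euc d)} (hX : Measurable X) (hX' : Measurable X')
    (hY : Measurable Y) (hw : Measurable w) (hζ : Measurable ζ) :
    eLpNorm (fun s => prlmcMap U η K (X s, w s, ζ s) - Y s) 2 κ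
      ≤ ENNReal.ofReal (1 - η * m + η ^ 2 * L ^ 2 / 2) * eLpNorm (fun s => X s - X' s) 2 κ
        + eLpNorm (fun s => midpointCorrection U η K (X s) (ζ s).1 (ζ s).2) 2 κ
        + eLpNorm (fun s => Y s - eulerStep U η (X' s, w s)) 2 κ := by
  have hg := h.measurable_gradient
  have heuler := (h.measurable_eulerStep η).comp (hX'.prodMk hw)
  have hcorr := (h.measurable_midpointCorrection η K).comp (hX.prodMk hζ)
  have hsplit : (fun s => prlmcMap U η K (X s, w s, ζ s) - Y s)
      = ((fun s => (X s - η • gradient U (X s)) - (X' s - η • gradient U (X' s)))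
          + fun s => midpointCorrection U η K (X s) (ζ s).1 (ζ s).2)
        - fun s => Y s - eulerStep U η (X' s, w s) := by
    funext s
    simp only [prlmcMap, eulerStep, Pi.add_apply, Pi.sub_apply]
    abel
  have hdrift : eLpNorm (fun s => (X s - η • gradient U (X s)) - (X' s - η • gradient U (X' s))) 2 κ
      ≤ ENNReal.ofReal (1 - η * m + η ^ 2 * L ^ 2 / 2) * eLpNorm (fun s => X s - X' s) 2 κ := by
    refine eLpNorm_le_mul_eLpNorm_of_ae_le_mul (ae_of_all _ fun s => ?_) 2
    rw [sub_sub_sub_comm, ← smul_sub]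
    exact norm_sub_smul_le hη h.2.2.1 (h.mul_norm_sub_sq_le_inner _ _) (h.norm_gradient_sub_le _ _)
  have hdriftMeas : Measurable
      fun s => (X s - η • gradient U (X s)) - (X' s - η • gradient U (X' s)) := by fun_prop
  rw [hsplit]
  refine (eLpNorm_sub_le (hdriftMeas.add hcorr).aestronglyMeasurable
    (hY.sub heuler).aestronglyMeasurable one_le_two).trans (add_le_add_left ?_ _)
  exact (eLpNorm_add_le hdriftMeas.aestronglyMeasurable hcorr.aestronglyMeasurable
    one_le_two).trans (add_le_add_left hdrift _)

-- Both chains are driven by the same Brownian increment `w`: the drift contracts the distance of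
-- the starting points, and the rest is the midpoint correction and the error of the Euler step.
lemma W2_gibbs_le_of_coupling (h : StrongAssumption U m L) (hK : 1 ≤ K) (hη : 0 ≤ η)
    {R : Type*} [MeasurableSpace R] {ν : Measure R} {w : R → Euc d} {Y : Euc d × R → Euc d}
    {e : ℝ} (hY : IsLangevinApprox U ν w Y η e) {μ : Measure (Euc d)} [IsProbabilityMeasure μ]
    (hinv : (μ.prod ((isotropicGaussian (Euc d) (2 * η)).prod (midpointNoise d K))).map
      (prlmcMap U η K) = μ)
    {Γ : Measure (Euc d × Euc d)} (hΓ₁ : Γ.map Prod.fst = μ) (hΓ₂ : Γ.map Prod.snd = gibbs U) :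
    W2 μ (gibbs U) ≤ ENNReal.ofReal (1 - η * m + η ^ 2 * L ^ 2 / 2)
        * eLpNorm (fun p => p.1 - p.2) 2 Γ
      + eLpNorm (fun p => midpointCorrection U η K p.1 p.2.1 p.2.2) 2 (μ.prod (midpointNoise d K))
      + ENNReal.ofReal e := by
  have := isProbabilityMeasure_midpointNoise (d := d) hK
  have := h.isProbabilityMeasure_gibbs
  have := hY.isProbabilityMeasure
  have hfst : MeasurePreserving Prod.fst Γ μ := ⟨measurable_fst, hΓ₁⟩
  have hsnd : MeasurePreserving Prod.snd Γ (gibbs U) := ⟨measurable_snd, hΓ₂⟩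
  have : IsProbabilityMeasure Γ := by
    rw [← Measure.isProbabilityMeasure_map_iff measurable_fst.aemeasurable, hΓ₁]
    infer_instance
  have hw := hY.measurable_increment
  have hstart := measurePreserving_fst (μ := Γ.prod ν) (ν := midpointNoise d K)
  have hpair := measurePreserving_fst.comp hstart
  have hlangevin := (hsnd.prod (MeasurePreserving.id ν)).comp hstart
  have hcorrLaw := (hfst.comp (measurePreserving_fst (ν := ν))).prod
    (MeasurePreserving.id (midpointNoise d K))
  have hprlmc := (MeasurePreserving.mk (h.measurable_prlmcMap η K) hinv).comp
    ((measurePreserving_prodAssoc _ _ _).comp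
      ((hfst.prod ⟨hw, hY.map_increment⟩).prod (MeasurePreserving.id (midpointNoise d K))))
  have hlangevinStep := hY.measurePreserving_step.comp hlangevin
  have hdist := eLpNorm_comp_measurePreserving (p := 2) (g := fun p : Euc d × Euc d => p.1 - p.2)
    (by fun_prop) hpair
  have hcorrection := eLpNorm_comp_measurePreserving (p := 2)
    (h.measurable_midpointCorrection η K).aestronglyMeasurable hcorrLaw
  have herror := (eLpNorm_comp_measurePreserving (p := 2)
    (hY.measurable_step.sub ((h.measurable_eulerStep η).comp
      (measurable_fst.prodMk (hw.comp measurable_snd)))).aestronglyMeasurable hlangevin).trans_le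
    hY.eLpNorm_step_sub_eulerStep_le
  have htriangle := h.eLpNorm_prlmcMap_sub_le_add hη
    (κ := (Γ.prod ν).prod (midpointNoise d K)) (X := fun q => q.1.1.1) (X' := fun q => q.1.1.2)
    (Y := fun q => Y (q.1.1.2, q.1.2)) (w := fun q => w q.1.2) (ζ := Prod.snd) (by fun_prop)
    (by fun_prop) hlangevinStep.measurable (by fun_prop) measurable_snd
  refine (W2_map_le hprlmc hlangevinStep).trans (htriangle.trans ?_)
  exact add_le_add (add_le_add (mul_le_mul_right hdist.le _) hcorrection.le) herror

end StrongAssumption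

/-! ### The stationary law of the chain -/

lemma sqrt_add_half_le_sqrt_add_two {x : ℝ} (hx : 0 ≤ x) (hx₂ : x ≤ 2) : √x + 1 / 2 ≤ √(x + 2) := by
  have : √x ≤ 3 / 2 := Real.sqrt_le_iff.2 ⟨by norm_num, by linarith⟩
  exact Real.le_sqrt_of_sq_le (by nlinarith [Real.sq_sqrt hx])

section Recursion

variable {m L η d S s w : ℝ}

lemma mul_mul_le_one_of_mul_mul_sq_le (hm : 0 < m) (hmL : m ≤ L) {c : ℝ} (hηL : c * η * L ^ 2 ≤ m) :
    c * (η * L) ≤ 1 :=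
  le_of_mul_le_mul_right (by linarith) (hm.trans_le hmL)

lemma mul_mul_sqrt_div_le (hm : 0 < m) (hη : 0 ≤ η) (hd : 0 ≤ d) (hηL : 400 * η * L ^ 2 ≤ m) :
    η * (L * √(d / m)) ≤ √η * √d / 20 := by
  refine (abs_le_of_sq_le_sq' ?_ (by positivity)).2
  rw [mul_pow, mul_pow, Real.sq_sqrt (by positivity), div_pow, mul_pow, Real.sq_sqrt hη,
    Real.sq_sqrt hd, ← mul_div_assoc, ← mul_div_assoc, div_le_iff₀ hm]
  linarith [mul_le_mul_of_nonneg_left hηL (mul_nonneg hη hd)]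

lemma le_of_le_contraction_add (hm : 0 < m) (hmL : m ≤ L) (hη : 0 < η) (hd : 0 ≤ d)
    (hs₂ : s ≤ 3 / 2) (hw : 0 ≤ w) (hS : √d ≤ S) (hηL : 400 * η * L ^ 2 ≤ m)
    (hrec : w ≤ (1 - η * m + η ^ 2 * L ^ 2 / 2) * w + η * L * √η * s * S
      + η * (L * (η * (L * √(d / m)) + √(2 * η * d))) * Real.exp (η * L)) :
    w ≤ L / m * √η * (√2 * √d + (s + 1 / 2) * S) := by
  have hL := hm.trans_le hmL
  have hηL₁ : η * L ≤ 1 / 400 := by linarith [mul_mul_le_one_of_mul_mul_sq_le hm hmL hηL]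
  have hexp : Real.exp (η * L) ≤ 1.01 :=
    (Real.exp_bound_div_one_sub_of_interval (by positivity) (by linarith)).trans
      ((div_le_iff₀ (by linarith)).2 (by linarith))
  have hsqrt : √(2 * η * d) = √2 * (√η * √d) := by
    rw [mul_assoc, Real.sqrt_mul zero_le_two, Real.sqrt_mul hη.le]
  have hsqrt_two : √2 ≤ 1.42 := Real.sqrt_le_iff.2 (by norm_num)
  set D := √η * √d
  have hD₀ : 0 ≤ D := by positivity
  have hT₀ : 0 ≤ √η * S := mul_nonneg (Real.sqrt_nonneg _) ((Real.sqrt_nonneg d).trans hS)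
  have hD : D ≤ √η * S := mul_le_mul_of_nonneg_left hS (Real.sqrt_nonneg _)
  have herror : (η * (L * √(d / m)) + √(2 * η * d)) * Real.exp (η * L) ≤ (√2 + 0.07) * D := by
    calc _ ≤ (D / 20 + √2 * D) * 1.01 := by
          rw [hsqrt]
          gcongr
          exact mul_mul_sqrt_div_le hm hη.le hd hηL
      _ ≤ _ := by linarith [mul_le_mul_of_nonneg_right hsqrt_two hD₀]
  have hdiv : m * w ≤ η * L ^ 2 / 2 * w + L * (s * (√η * S) + (√2 + 0.07) * D) :=
    le_of_mul_le_mul_left (by linarith [mul_le_mul_of_nonneg_left herror (mul_pos hη hL).le]) hη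
  have hself : η * L ^ 2 / 2 * w ≤ m * w / 800 := by
    linarith [mul_le_mul_of_nonneg_right hηL hw]
  have hhalf : s * (√η * S) + (√2 + 0.07) * D
      ≤ 799 / 800 * (√2 * D + (s + 1 / 2) * (√η * S)) := by
    linarith [mul_le_mul_of_nonneg_right hs₂ hT₀, mul_le_mul_of_nonneg_right hsqrt_two hD₀]
  rw [div_mul_eq_mul_div, div_mul_eq_mul_div, le_div_iff₀ hm]
  linarith [mul_le_mul_of_nonneg_left hhalf hL.le]

end Recursion

namespace StrongAssumption

variable {d K : ℕ} {U : Euc d → ℝ} {m L η : ℝ} {μ : Measure (Euc d)}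

lemma bind_prlmcKernel (h : StrongAssumption U m L) (hK : 1 ≤ K) :
    μ.bind (prlmcKernel U η K)
      = (μ.prod ((isotropicGaussian (Euc d) (2 * η)).prod (midpointNoise d K))).map
        (prlmcMap U η K) := by
  have := isProbabilityMeasure_midpointNoise (d := d) hK
  rw [funext (h.prlmcKernel_eq_map (η := η) hK)]
  exact bind_map_eq_map_prod (h.measurable_prlmcMap η K) μ _

lemma isContractiveRandomMap_prlmcMap (h : StrongAssumption U m L) (hK : 1 ≤ K) (hη : 0 < η)
    (hηL : 21 * η * L ^ 2 ≤ m) :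
    IsContractiveRandomMap (prlmcMap U η K)
      ((isotropicGaussian (Euc d) (2 * η)).prod (midpointNoise d K)) 2 (√(1 - η * m)).toNNReal where
  measurable := h.measurable_prlmcMap η K
  memLp_zero := h.memLp_prlmcMap hK hη.le 0
  eLpNorm_sub_le x y := by
    refine (h.eLpNorm_prlmcMap_sub_le hK hη.le hηL x y).trans_eq ?_
    rw [ENNReal.ofReal_mul (Real.sqrt_nonneg _), ofReal_norm]
    rfl
  lt_one := by
    rw [Real.toNNReal_lt_one, Real.sqrt_lt' one_pos]
    linarith [mul_pos hη h.2.1]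

lemma W2_gibbs_toReal_le (h : StrongAssumption U m L) (hK : 1 ≤ K) (hη : 0 < η)
    (hηL : 400 * η * L ^ 2 ≤ m) [IsProbabilityMeasure μ] (hμ : MemLp (fun x => x) 2 μ)
    (hinv : (μ.prod ((isotropicGaussian (Euc d) (2 * η)).prod (midpointNoise d K))).map
      (prlmcMap U η K) = μ) :
    (W2 μ (gibbs U)).toReal ≤ (1 - η * m + η ^ 2 * L ^ 2 / 2) * (W2 μ (gibbs U)).toReal
      + η * L * √η * √(2 - 2 / K) * √(η * L ^ 2 * (∫⁻ x, ‖x‖ₑ ^ 2 ∂μ).toReal / 3 + d)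
      + η * (L * (η * (L * √(d / m)) + √(2 * η * d))) * Real.exp (η * L) := by
  have hm : 0 < m := h.2.1
  have hmL : m ≤ L := h.2.2.1
  have hL := h.const_pos
  have := h.isProbabilityMeasure_gibbs
  have hηm : η * m < 1 := by
    linarith [mul_le_mul_of_nonneg_left hmL hη.le, mul_mul_le_one_of_mul_mul_sq_le hm hmL hηL,
      mul_pos hη hL]
  have hrate : 0 < 1 - η * m + η ^ 2 * L ^ 2 / 2 := by
    linarith [show 0 ≤ η ^ 2 * L ^ 2 / 2 by positivity]
  have hfinite : W2 μ (gibbs U) ≠ ∞ := W2_ne_top hμ (h.memLp_id_gibbs.mono_exponent (by norm_num))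
  refine le_of_forall_pos_le_add fun ε hε => ?_
  set σ := ε / (η * Real.exp (η * L)) with hσ
  obtain ⟨R, _, ν, w, Y, hY⟩ := h.exists_isLangevinApprox hη (show 0 < σ by positivity)
  have hcoupling := le_mul_W2_add_of_forall_coupling (ENNReal.ofReal_pos.2 hrate).ne'
    ENNReal.ofReal_ne_top fun Γ hΓ₁ hΓ₂ =>
      (h.W2_gibbs_le_of_coupling hK hη.le hY hinv hΓ₁ hΓ₂).trans_eq (add_assoc _ _ _)
  have hbound := hcoupling.trans (add_le_add_right
    (add_le_add_left (h.eLpNorm_midpointCorrection_le hK hη.le hμ) _) _)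
  rw [← ENNReal.ofReal_toReal hfinite, ← ENNReal.ofReal_mul hrate.le,
    ← ENNReal.ofReal_add (by positivity) (by positivity),
    ← ENNReal.ofReal_add (by positivity) (by positivity),
    ENNReal.ofReal_le_ofReal_iff (by positivity)] at hbound
  have hσε : η * σ * Real.exp (η * L) = ε := by rw [hσ]; field_simp
  linarith

lemma W2_gibbs_le (h : StrongAssumption U m L) (hK : 1 ≤ K) (hη : 0 < η)
    (hηL : 400 * η * L ^ 2 ≤ m) [IsProbabilityMeasure μ] (hμ : MemLp (fun x => x) 2 μ)
    (hinv : (μ.prod ((isotropicGaussian (Euc d) (2 * η)).prod (midpointNoise d K))).map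
      (prlmcMap U η K) = μ) :
    W2 μ (gibbs U) ≤ ENNReal.ofReal (L / m * √η * (√(2 * d + 4 * η ^ 2 * L * d
        + 8 * L ^ 2 * η ^ 2 * d)
      + √(4 - 2 / K) * √(η * L ^ 2 * (∫⁻ x, ‖x‖ₑ ^ 2 ∂μ).toReal / 3 + d))) := by
  have hm := h.2.1
  have hL := h.const_pos
  have := h.isProbabilityMeasure_gibbs
  have hK₁ : (0 : ℝ) ≤ 2 - 2 / K :=
    sub_nonneg.2 (div_le_self zero_le_two (by exact_mod_cast hK))
  have hK₂ : (2 : ℝ) - 2 / K ≤ 2 := sub_le_self _ (by positivity)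
  have hfinite : W2 μ (gibbs U) ≠ ∞ := W2_ne_top hμ (h.memLp_id_gibbs.mono_exponent (by norm_num))
  set S := √(η * L ^ 2 * (∫⁻ x, ‖x‖ₑ ^ 2 ∂μ).toReal / 3 + d)
  have hdS : √(d : ℝ) ≤ S := Real.sqrt_le_sqrt (le_add_of_nonneg_left (by positivity))
  have hsqrt := sqrt_add_half_le_sqrt_add_two hK₁ hK₂
  rw [← ENNReal.ofReal_toReal hfinite]
  refine ENNReal.ofReal_le_ofReal ((le_of_le_contraction_add hm h.2.2.1 hη d.cast_nonneg
    (Real.sqrt_le_iff.2 ⟨by norm_num, by linarith⟩) ENNReal.toReal_nonneg hdS hηL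
    (h.W2_gibbs_toReal_le hK hη hηL hμ hinv)).trans ?_)
  rw [← Real.sqrt_mul zero_le_two, show (4 : ℝ) - 2 / K = 2 - 2 / K + 2 by ring]
  gcongr
  linarith [show 0 ≤ 4 * η ^ 2 * L * d + 8 * L ^ 2 * η ^ 2 * d by positivity]

end StrongAssumption

/-- Under Assumption 1, for any `η ∈ (0, η₀ ∧ 2/(m+L))`, the 2-Wasserstein
distance between the stationary distribution `π_η` of PRLMC and the target `π ∝ e^{-U}`
satisfies
`W₂(π_η, π) ≤ (L/m) √η [ (2d + 4η²Ld + 8L²η²d)^{1/2} + √(4 − 2/K) (ηL² π_η(|x|²)/3 + d)^{1/2} ]`. -/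
theorem stmt2 (m L : ℝ) (hm : 0 < m) (hmL : m ≤ L) :
    ∃ η₀ : ℝ, η₀ ∈ Set.Ioo (0 : ℝ) 1 ∧
      ∀ (d K : ℕ), 1 ≤ K → ∀ U : Euc d → ℝ, StrongAssumption U m L →
        ∀ η : ℝ, η ∈ Set.Ioo (0 : ℝ) (min η₀ (2 / (m + L))) →
          ∃ πη : Measure (Euc d), IsProbabilityMeasure πη ∧
            πη.bind (prlmcKernel U η K) = πη ∧
            (∀ μ : Measure (Euc d), IsProbabilityMeasure μ →
              μ.bind (prlmcKernel U η K) = μ → μ = πη) ∧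
            W2 πη (gibbs U) ≤
              ENNReal.ofReal ((L / m) * Real.sqrt η *
                (Real.sqrt (2 * (d : ℝ) + 4 * η ^ 2 * L * (d : ℝ) + 8 * L ^ 2 * η ^ 2 * (d : ℝ)) +
                 Real.sqrt (4 - 2 / (K : ℝ)) *
                   Real.sqrt (η * L ^ 2 *
                       (∫⁻ y, (‖y‖₊ : ℝ≥0∞) ^ 2 ∂πη).toReal / 3 + (d : ℝ)))) := by
  have hL : 0 < L := hm.trans_le hmL
  refine ⟨min (1 / 2) (m / (400 * L ^ 2)),
    ⟨by positivity, (min_le_left _ _).trans_lt (by norm_num)⟩,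
    fun d K hK U hU η ⟨hη, hη_lt⟩ => ?_⟩
  have hηL : 400 * η * L ^ 2 ≤ m := by
    have hlt := hη_lt.trans_le ((min_le_left _ _).trans (min_le_right _ _))
    linarith [(lt_div_iff₀ (by positivity)).1 hlt]
  have hηL₂₁ : 21 * η * L ^ 2 ≤ m := by linarith [show 0 < η * L ^ 2 by positivity]
  have hcontract := hU.isContractiveRandomMap_prlmcMap hK hη hηL₂₁
  have := isProbabilityMeasure_midpointNoise (d := d) hK
  obtain ⟨πη, hprob, hmem, hinv⟩ := hcontract.exists_invariant ENNReal.ofNat_ne_top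
  refine ⟨πη, hprob, (hU.bind_prlmcKernel hK).trans hinv, fun μ hμ hμinv => ?_,
    hU.W2_gibbs_le hK hη hηL hmem hinv⟩
  exact hcontract.eq_of_invariant one_le_two ((hU.bind_prlmcKernel hK).symm.trans hμinv) hinv

end
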